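/- Radial symmetry of entire Chern–Simons vortices without singular source. Let w : ℝ² → ℝ be a smooth function, not identically zero, satisfying Δw + e^w(1 − e^w) = 0 on ℝ², with e^w(1 − e^w) integrable on ℝ². Then there exist a point x₀ ∈ ℝ² and a strictly decreasing function W : [0, ∞) → ℝ such that w(x) = W(|x − x₀|) for all x ∈ ℝ². -/

import Mathlib

/-!
Write `f = e^w (1 - e^w)`, so that `-Δw = f`. The proof determines the behaviour of `w` at
infinity from the integrability of `f`, and then applies the method of moving planes.

*Sign.* Comparison with a function blowing up on the boundary of a large disc gives `w ≤ 0`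
(`w_nonpos`); the strong maximum principle (`strong_max`, from Hopf's barrier) and `w ≢ 0` give
`w < 0` (`w_neg`). Hence `0 < f ≤ 1` and `f ≤ e^w`.

*Integral equation.* Testing `Δw` against the weight `(1 - |z|²)₊²` gives Green's representation
of `w x` by a weighted mean of `w` over the disc of radius `R` and a Green potential of `f`
(`mean_add_pot`). As `R → ∞` the means around two different centres differ by `o(1)`, because
`w ≤ 0` and the means decrease at most like `log R`. So, up to a bounded error,
`w x = -b ∫ (log (1 + |x - y|) - log (1 + |y|)) f y dy` with a constant `b > 0`
(`exists_abs_add_integral_logKer_le`).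

*Asymptotics.* With `β = b ∫ f`, the integral equation gives `w ≥ -β log (1 + |x|) - C` and
`w ≤ C_ε - (β - ε) log (1 + |x|)` for every `ε > 0`. In particular `w → -∞`, so `f ≥ e^w / 2`
far out, and integrability of `f` forces `β > 2` (`two_lt_of_source`). Then `log (1 + |y|) f` is
integrable and `w + β log (1 + |x|)` is bounded.

*Moving planes.* Since `β > 2`, the linearised zeroth order coefficient `e^w` of the equation for
the difference between `w` and its reflection decays faster than `|x|⁻²`, which is enough for a
maximum principle on half planes outside a large disc. Moving the reflection lines in from
infinity, in every direction, gives radial symmetry and strict monotonicity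
(`radial_of_log_asymptotics`).
-/

open MeasureTheory Real Filter Metric Set

noncomputable section

/-- The plane `ℝ²`. -/
abbrev R2 : Type := EuclideanSpace ℝ (Fin 2)

/-- The Laplacian `Δf = ∂²f/∂x₁² + ∂²f/∂x₂²`. -/
def lap (f : R2 → ℝ) (x : R2) : ℝ :=
  ∑ i : Fin 2,
    fderiv ℝ (fun y => fderiv ℝ f y (EuclideanSpace.single i 1)) x (EuclideanSpace.single i 1)

open scoped Topology RealInnerProductSpace

/-! ### Calculus of the Laplacian -/

lemma fderiv_fderiv_apply {f : R2 → ℝ} {x : R2} (hf : ContDiffAt ℝ 2 f x) (a b : R2) :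
    fderiv ℝ (fun y => fderiv ℝ f y a) x b = fderiv ℝ (fderiv ℝ f) x b a := by
  have h1 : DifferentiableAt ℝ (fderiv ℝ f) x :=
    (hf.fderiv_right (m := 1) (by norm_num)).differentiableAt (by norm_num)
  rw [fderiv_clm_apply h1 (differentiableAt_const a)]
  simp

lemma lap_eq {f : R2 → ℝ} {x : R2} (hf : ContDiffAt ℝ 2 f x) :
    lap f x = ∑ i : Fin 2,
      fderiv ℝ (fderiv ℝ f) x (EuclideanSpace.single i 1) (EuclideanSpace.single i 1) := by
  simp only [lap, fderiv_fderiv_apply hf]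

/-- The Laplacian may be computed in any orthonormal basis. -/
lemma lap_eq_basis {f : R2 → ℝ} {x : R2} (hf : ContDiffAt ℝ 2 f x)
    (v : OrthonormalBasis (Fin 2) ℝ R2) :
    lap f x = ∑ i : Fin 2, fderiv ℝ (fderiv ℝ f) x (v i) (v i) := by
  have h1 := congrFun (InnerProductSpace.laplacian_eq_iteratedFDeriv_orthonormalBasis f v) x
  have h2 := congrFun (InnerProductSpace.laplacian_eq_iteratedFDeriv_orthonormalBasis f
    (EuclideanSpace.basisFun (Fin 2) ℝ)) x
  rw [lap_eq hf]
  simp only [iteratedFDeriv_two_apply, EuclideanSpace.basisFun_apply] at h1 h2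
  simpa using h2.symm.trans h1

lemma lap_add {f g : R2 → ℝ} {x : R2} (hf : ContDiffAt ℝ 2 f x) (hg : ContDiffAt ℝ 2 g x) :
    lap (fun y => f y + g y) x = lap f x + lap g x := by
  have h (u : R2 → ℝ) := congrFun (InnerProductSpace.laplacian_eq_iteratedFDeriv_orthonormalBasis u
    (EuclideanSpace.basisFun (Fin 2) ℝ)) x
  have h' (u : R2 → ℝ) (hu : ContDiffAt ℝ 2 u x) : lap u x = Laplacian.laplacian u x := by
    rw [h, lap_eq hu]; simp [iteratedFDeriv_two_apply]
  rw [h' _ (hf.add hg), h' _ hf, h' _ hg, ← hf.laplacian_add hg]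
  rfl

lemma lap_const_mul {f : R2 → ℝ} {x : R2} (c : ℝ) (hf : ContDiffAt ℝ 2 f x) :
    lap (fun y => c * f y) x = c * lap f x := by
  have h (u : R2 → ℝ) := congrFun (InnerProductSpace.laplacian_eq_iteratedFDeriv_orthonormalBasis u
    (EuclideanSpace.basisFun (Fin 2) ℝ)) x
  have h' (u : R2 → ℝ) (hu : ContDiffAt ℝ 2 u x) : lap u x = Laplacian.laplacian u x := by
    rw [h, lap_eq hu]; simp [iteratedFDeriv_two_apply]
  rw [h' _ (contDiffAt_const.mul hf), h' _ hf]
  exact InnerProductSpace.laplacian_smul c hf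

/-- Second-order necessary condition at a local minimum, in one variable. -/
lemma deriv_deriv_nonneg_of_isLocalMin {g : ℝ → ℝ} (hg : ContinuousAt g 0)
    (hmin : IsLocalMin g 0) : 0 ≤ deriv (deriv g) 0 := by
  by_contra! hneg
  -- if the second derivative were negative, `0` would also be a local maximum, so `g` is locally
  -- constant
  have hmax : IsLocalMax g 0 := isLocalMax_of_deriv_deriv_neg hneg hmin.deriv_eq_zero hg
  have hc : g =ᶠ[𝓝 0] fun _ => g 0 := by
    filter_upwards [hmin, hmax] with t h1 h2 using le_antisymm h2 h1
  have h2 : deriv (deriv g) 0 = 0 := by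
    rw [hc.deriv.deriv_eq]; simp
  linarith

lemma fderiv_fderiv_nonneg_of_isLocalMin {f : R2 → ℝ} {x : R2} (hf : ContDiffAt ℝ 2 f x)
    (hmin : IsLocalMin f x) (e : R2) : 0 ≤ fderiv ℝ (fderiv ℝ f) x e e := by
  have hl (t : ℝ) : HasDerivAt (fun t : ℝ => x + t • e) e t := by
    simpa using ((hasDerivAt_id t).smul_const e).const_add x
  have hx0 : x + (0 : ℝ) • e = x := by simp
  have hlc : ContinuousAt (fun t : ℝ => x + t • e) 0 := (hl 0).continuousAt
  have hev : ∀ᶠ y in 𝓝 x, ContDiffAt ℝ 2 f y := hf.eventually (by simp)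
  have hev' : ∀ᶠ t in 𝓝 (0 : ℝ), ContDiffAt ℝ 2 f (x + t • e) := by
    apply hlc.eventually; simpa using hev
  have hd : deriv (fun t : ℝ => f (x + t • e)) =ᶠ[𝓝 0] fun t => fderiv ℝ f (x + t • e) e := by
    filter_upwards [hev'] with t ht
    exact ((ht.differentiableAt (by norm_num)).hasFDerivAt.comp_hasDerivAt t (hl t)).deriv
  have h1 : DifferentiableAt ℝ (fderiv ℝ f) x :=
    (hf.fderiv_right (m := 1) (by norm_num)).differentiableAt (by norm_num)
  have h1' : HasFDerivAt (fderiv ℝ f) (fderiv ℝ (fderiv ℝ f) x) (x + (0 : ℝ) • e) := by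
    rw [hx0]; exact h1.hasFDerivAt
  have h2 : HasDerivAt (fun t : ℝ => fderiv ℝ f (x + t • e) e) (fderiv ℝ (fderiv ℝ f) x e e) 0 := by
    have q := h1'.clm_apply (hasFDerivAt_const e (x + (0 : ℝ) • e))
    have q2 := HasFDerivAt.comp_hasDerivAt (f := fun t : ℝ => x + t • e) (0 : ℝ) q (hl 0)
    simpa [Function.comp_def] using q2
  have h3 : IsLocalMin (fun t : ℝ => f (x + t • e)) 0 := by
    have h : ∀ᶠ y in 𝓝 (x + (0 : ℝ) • e), f x ≤ f y := by rw [hx0]; exact hmin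
    filter_upwards [hlc.eventually h] with t ht
    simpa using ht
  have h4 : ContinuousAt (fun t : ℝ => f (x + t • e)) 0 := by
    have : ContinuousAt f (x + (0 : ℝ) • e) := by rw [hx0]; exact hf.continuousAt
    exact ContinuousAt.comp (f := fun t : ℝ => x + t • e) this hlc
  have h5 := deriv_deriv_nonneg_of_isLocalMin h4 h3
  rwa [hd.deriv_eq, h2.deriv] at h5

lemma lap_nonneg_of_isLocalMin {f : R2 → ℝ} {x : R2} (hf : ContDiffAt ℝ 2 f x)
    (hmin : IsLocalMin f x) : 0 ≤ lap f x := by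
  rw [lap_eq hf]
  exact Finset.sum_nonneg fun i _ => fderiv_fderiv_nonneg_of_isLocalMin hf hmin _

/-- The Laplacian of a function of the squared distance to `p`. -/
lemma lap_radial {F F1 : ℝ → ℝ} {F2 : ℝ} (p x : R2)
    (h1 : ∀ᶠ s in 𝓝 (‖x - p‖ ^ 2), HasDerivAt F (F1 s) s)
    (h2 : HasDerivAt F1 F2 (‖x - p‖ ^ 2)) :
    lap (fun y => F (‖y - p‖ ^ 2)) x = 4 * F1 (‖x - p‖ ^ 2) + 4 * ‖x - p‖ ^ 2 * F2 := by
  have hn (y : R2) : HasFDerivAt (fun y : R2 => ‖y - p‖ ^ 2)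
      (2 • (innerSL ℝ (y - p))) y := by
    have := ((hasFDerivAt_id (𝕜 := ℝ) y).sub_const p).norm_sq
    simpa using this
  have hc : ContinuousAt (fun y : R2 => ‖y - p‖ ^ 2) x := (hn x).continuousAt
  have key (a : R2) : fderiv ℝ (fun y => fderiv ℝ (fun y => F (‖y - p‖ ^ 2)) y a) x a
      = F1 (‖x - p‖ ^ 2) * (2 * ⟪a, a⟫) + F2 * (2 * ⟪x - p, a⟫) * (2 * ⟪x - p, a⟫) := by
    have e1 : (fun y => fderiv ℝ (fun y => F (‖y - p‖ ^ 2)) y a) =ᶠ[𝓝 x]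
        fun y => F1 (‖y - p‖ ^ 2) * (2 * ⟪y - p, a⟫) := by
      filter_upwards [hc.eventually h1] with y hy
      have hq : HasFDerivAt (fun y : R2 => F (‖y - p‖ ^ 2)) _ y := hy.comp_hasFDerivAt y (hn y)
      rw [hq.fderiv]
      simp [inner_sub_left]
    rw [e1.fderiv_eq]
    have e2 : HasFDerivAt (fun y : R2 => 2 * ⟪y - p, a⟫) (2 • (innerSL ℝ a)) x := by
      have : HasFDerivAt (fun y : R2 => ⟪a, y⟫) (innerSL ℝ a) x := (innerSL ℝ a).hasFDerivAt
      have h3 := ((this.sub_const ⟪a, p⟫).const_mul 2)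
      refine (h3.congr_of_eventuallyEq (Eventually.of_forall fun y => ?_)).congr_fderiv ?_
      · simp only [inner_sub_left]; rw [real_inner_comm, real_inner_comm a p]
      · ext; simp
    have e3 := (h2.comp_hasFDerivAt x (hn x)).mul e2
    have e4 := e3.fderiv
    have e5 : ((F1 ∘ fun y : R2 => ‖y - p‖ ^ 2) * fun y : R2 => 2 * ⟪y - p, a⟫) =
      fun y => F1 (‖y - p‖ ^ 2) * (2 * ⟪y - p, a⟫) := rfl
    rw [← e5, e4]
    simp [inner_sub_left]
    ring
  have hs : ‖x - p‖ ^ 2 = (x - p) 0 ^ 2 + (x - p) 1 ^ 2 := by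
    rw [EuclideanSpace.norm_sq_eq]; simp
  simp only [lap, key]
  simp only [Fin.sum_univ_two, EuclideanSpace.inner_single_right]
  simp
  simp at hs
  rw [hs]
  ring

/-! ### Reflections -/

/-- Reflection of the plane in the line `{x | ⟪x, e⟫ = l}`, for a unit vector `e`. -/
def rfl2 (e : R2) (l : ℝ) (x : R2) : R2 := x + (2 * (l - ⟪x, e⟫)) • e

lemma inner_rfl2 {e : R2} (he : ‖e‖ = 1) (l : ℝ) (x : R2) : ⟪rfl2 e l x, e⟫ = 2 * l - ⟪x, e⟫ := by
  simp only [rfl2, inner_add_left, real_inner_smul_left, real_inner_self_eq_norm_sq, he]; ring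

lemma rfl2_rfl2 {e : R2} (he : ‖e‖ = 1) (l : ℝ) (x : R2) : rfl2 e l (rfl2 e l x) = x := by
  have h := inner_rfl2 he l x
  unfold rfl2 at h ⊢
  rw [h]; module

lemma rfl2_eq_self {e : R2} {l : ℝ} {x : R2} (h : ⟪x, e⟫ = l) : rfl2 e l x = x := by
  simp [rfl2, h]

lemma norm_rfl2_sub {e : R2} (l : ℝ) (x : R2) : ‖rfl2 e l x - x‖ = 2 * |l - ⟪x, e⟫| * ‖e‖ := by
  simp [rfl2, norm_smul]

lemma contDiff_rfl2 (e : R2) (l : ℝ) : ContDiff ℝ ⊤ (rfl2 e l) := by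
  unfold rfl2
  exact contDiff_id.add ((contDiff_const.mul (contDiff_const.sub
    (contDiff_id.inner ℝ contDiff_const))).smul contDiff_const)

lemma continuous_rfl2 (e : R2) : Continuous (fun q : ℝ × R2 => rfl2 e q.1 q.2) := by
  unfold rfl2; fun_prop

/-- The linear part of the reflection, as a linear isometry. -/
def rflLin (e : R2) : R2 ≃ₗᵢ[ℝ] R2 := (ℝ ∙ e)ᗮ.reflection

lemma rfl2_eq {e : R2} (he : ‖e‖ = 1) (l : ℝ) (x : R2) :
    rfl2 e l x = rflLin e x + (2 * l) • e := by
  rw [rflLin, Submodule.reflection_orthogonal_apply, Submodule.reflection_singleton_apply, he]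
  simp only [rfl2, real_inner_comm x e]
  norm_num
  module

lemma norm_rfl2_le {e : R2} (he : ‖e‖ = 1) (l : ℝ) (x : R2) : ‖rfl2 e l x‖ ≤ ‖x‖ + 2 * |l| := by
  rw [rfl2_eq he]
  refine (norm_add_le _ _).trans ?_
  simp [norm_smul, he]

lemma hasFDerivAt_rfl2 {e : R2} (he : ‖e‖ = 1) (l : ℝ) (x : R2) :
    HasFDerivAt (rfl2 e l) ((rflLin e).toContinuousLinearEquiv : R2 →L[ℝ] R2) x := by
  have : rfl2 e l = fun x => rflLin e x + (2 * l) • e := funext fun x => rfl2_eq he l x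
  rw [this]
  exact ((rflLin e).toContinuousLinearEquiv.hasFDerivAt).add_const _

lemma lap_rfl2 {f : R2 → ℝ} (hf : ContDiff ℝ 2 f) {e : R2} (he : ‖e‖ = 1) (l : ℝ) (x : R2) :
    lap (fun y => f (rfl2 e l y)) x = lap f (rfl2 e l x) := by
  have hf1 : Differentiable ℝ f := hf.differentiable (by norm_num)
  have hf2 : Differentiable ℝ (fderiv ℝ f) :=
    (hf.fderiv_right (m := 1) (by norm_num)).differentiable (by norm_num)
  rw [lap_eq_basis hf.contDiffAt ((EuclideanSpace.basisFun (Fin 2) ℝ).map (rflLin e))]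
  unfold lap
  refine Finset.sum_congr rfl fun i _ => ?_
  set a : R2 := EuclideanSpace.single i 1
  have e1 : (fun y => fderiv ℝ (fun y => f (rfl2 e l y)) y a)
      = fun y => fderiv ℝ f (rfl2 e l y) (rflLin e a) := by
    funext y
    have := ((hf1 (rfl2 e l y)).hasFDerivAt.comp y (hasFDerivAt_rfl2 he l y)).fderiv
    simp only [Function.comp_def] at this
    rw [this]; rfl
  rw [e1]
  have e2 := (((hf2 (rfl2 e l x)).hasFDerivAt.comp x (hasFDerivAt_rfl2 he l x)).clm_apply
    (hasFDerivAt_const (rflLin e a) x)).fderiv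
  simp only [Function.comp_def] at e2
  rw [e2]
  simp [a]

/-! ### Maximum principles -/

/-- Keller–Osserman bound. The barrier is `-log (R² - |y - x₀|²)`, whose Laplacian
`4R² / (R² - |y - x₀|²)²` is that of the hyperbolic metric on a disc; at a maximum point of
`(R² - |y - x₀|²) exp w` it contradicts the equation as soon as `R` is large. -/
lemma w_nonpos {w : R2 → ℝ} (hw : ContDiff ℝ 2 w)
    (heq : ∀ x : R2, lap w x + exp (w x) * (1 - exp (w x)) = 0) (x₀ : R2) : w x₀ ≤ 0 := by
  by_contra! hpos
  set A := exp (w x₀) with hA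
  have hA1 : 1 < A := by rw [hA]; exact Real.one_lt_exp_iff.2 hpos
  obtain ⟨R, hR0, hR⟩ : ∃ R : ℝ, 0 < R ∧ 4 < R ^ 2 * (A * (A - 1)) := by
    have hk : 0 < A * (A - 1) := by nlinarith
    refine ⟨1 + 4 / (A * (A - 1)), by positivity, ?_⟩
    have h4 : 0 < 4 / (A * (A - 1)) := by positivity
    have h5 : 4 / (A * (A - 1)) * (A * (A - 1)) = 4 := div_mul_cancel₀ _ hk.ne'
    nlinarith [mul_pos h4 hk, mul_pos (mul_pos h4 h4) hk]
  have hcont : Continuous fun y : R2 => (R ^ 2 - ‖y - x₀‖ ^ 2) * exp (w y) := by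
    have := hw.continuous; fun_prop
  obtain ⟨y, hyB, hymax⟩ := (isCompact_closedBall x₀ R).exists_isMaxOn
    ⟨x₀, mem_closedBall_self hR0.le⟩ hcont.continuousOn
  set E := exp (w y) with hE
  have hE0 : 0 < E := exp_pos _
  set η := R ^ 2 - ‖y - x₀‖ ^ 2 with hη
  have h1 : R ^ 2 * A ≤ η * E := by
    have := hymax (mem_closedBall_self hR0.le)
    simpa using this
  have hη0 : 0 < η := by
    by_contra! h
    nlinarith [mul_nonneg (neg_nonneg.2 h) hE0.le, pow_pos hR0 2]
  have hyb : y ∈ ball x₀ R := by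
    rw [mem_ball, dist_eq_norm]
    exact lt_of_pow_lt_pow_left₀ 2 hR0.le (by linarith)
  have hηR : η ≤ R ^ 2 := by rw [hη]; nlinarith [sq_nonneg ‖y - x₀‖]
  -- the logarithm of the maximized function
  have hFd : ∀ᶠ s in 𝓝 (‖y - x₀‖ ^ 2), HasDerivAt (fun s => -log (R ^ 2 - s)) (1 / (R ^ 2 - s)) s := by
    have : ∀ᶠ s in 𝓝 (‖y - x₀‖ ^ 2), s < R ^ 2 := eventually_lt_nhds (by linarith)
    filter_upwards [this] with s hs
    have := (((hasDerivAt_id s).const_sub (R ^ 2)).log (by simp; linarith)).neg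
    exact this.congr_deriv (by simp [neg_div])
  have hF2 : HasDerivAt (fun s => 1 / (R ^ 2 - s)) (1 / η ^ 2) (‖y - x₀‖ ^ 2) := by
    have := ((hasDerivAt_id (‖y - x₀‖ ^ 2)).const_sub (R ^ 2)).inv (by simp; linarith)
    simp only [one_div]
    exact this.congr_deriv (by simp [hη])
  have hlap := lap_radial x₀ y hFd hF2
  have hCD : ContDiffAt ℝ 2 (fun y : R2 => -log (R ^ 2 - ‖y - x₀‖ ^ 2)) y := by
    refine ContDiffAt.neg (ContDiffAt.log (f := fun y : R2 => R ^ 2 - ‖y - x₀‖ ^ 2) ?_ hη0.ne')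
    exact contDiffAt_const.sub ((contDiff_id.sub contDiff_const).norm_sq ℝ).contDiffAt
  have hmin : IsLocalMin (fun y : R2 => -1 * w y + -log (R ^ 2 - ‖y - x₀‖ ^ 2)) y := by
    filter_upwards [isOpen_ball.mem_nhds hyb] with u hu
    have hu0 : 0 < R ^ 2 - ‖u - x₀‖ ^ 2 := by
      rw [mem_ball, dist_eq_norm] at hu
      have := norm_nonneg (u - x₀)
      nlinarith
    have h2 := hymax (ball_subset_closedBall hu)
    simp only [mem_ofPred_eq] at h2
    have h3 := Real.log_le_log (mul_pos hu0 (exp_pos (w u))) h2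
    rw [Real.log_mul hu0.ne' (exp_pos _).ne', Real.log_mul hη0.ne' (exp_pos _).ne',
      Real.log_exp, Real.log_exp] at h3
    linarith
  have h0 := lap_nonneg_of_isLocalMin (contDiffAt_const.mul hw.contDiffAt |>.add hCD) hmin
  rw [lap_add (contDiffAt_const.mul hw.contDiffAt) hCD, lap_const_mul _ hw.contDiffAt, hlap] at h0
  have h3 : lap w y = E * (E - 1) := by have := heq y; rw [← hE] at this; linarith
  rw [h3, ← hη] at h0
  have h4 : 4 * (1 / η) + 4 * ‖y - x₀‖ ^ 2 * (1 / η ^ 2) = 4 * R ^ 2 / η ^ 2 := by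
    have : ‖y - x₀‖ ^ 2 = R ^ 2 - η := by rw [hη]; ring
    rw [this]; field_simp; ring
  have h5 : E * (E - 1) ≤ 4 * R ^ 2 / η ^ 2 := by linarith
  rw [le_div_iff₀ (by positivity)] at h5
  have h6 : R ^ 2 * (A - 1) ≤ η * (E - 1) := by nlinarith
  have h7 : (R ^ 2 * A) * (R ^ 2 * (A - 1)) ≤ (η * E) * (η * (E - 1)) := by
    apply mul_le_mul h1 h6 <;> [(have : 0 < A - 1 := by linarith); skip] <;> positivity
  have hR2 : 0 < R ^ 2 := by positivity
  nlinarith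

lemma deriv_nonneg_of_right {k : ℝ → ℝ} {k' : ℝ} (hk : HasDerivAt k k' 0) (h0 : k 0 = 0) {δ : ℝ}
    (hδ : 0 < δ) (hnn : ∀ t, 0 < t → t < δ → 0 ≤ k t) : 0 ≤ k' := by
  refine ge_of_tendsto hk.tendsto_slope_zero_right ?_
  filter_upwards [Ioo_mem_nhdsGT hδ] with t ht
  simp only [zero_add, h0, sub_zero, smul_eq_mul]
  exact mul_nonneg (inv_nonneg.2 ht.1.le) (hnn t ht.1 ht.2)

/-- **Hopf boundary lemma** for supersolutions of `Δz = C z`, with the barrier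
`exp (-α |y - p|²) - exp (-α r²)` on the annulus `r/2 ≤ |y - p| ≤ r`. -/
lemma hopf {z : R2 → ℝ} (hz : ContDiff ℝ 2 z) {p q : R2} (hpq : q ≠ p) {C : ℝ} (hC : 0 ≤ C)
    (hpos : ∀ y ∈ ball p ‖q - p‖, 0 < z y) (hnn : ∀ y ∈ closedBall p ‖q - p‖, 0 ≤ z y)
    (hq : z q = 0) (hlap : ∀ y ∈ ball p ‖q - p‖, lap z y ≤ C * z y) :
    fderiv ℝ z q (q - p) < 0 := by
  set r := ‖q - p‖ with hr
  have hr0 : 0 < r := norm_pos_iff.2 (sub_ne_zero.2 hpq)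
  obtain ⟨α, hα1, hα⟩ : ∃ α : ℝ, 1 ≤ α ∧ C < α * (α * r ^ 2 - 4) := by
    refine ⟨1 + (5 + C) / r ^ 2, by have : 0 ≤ (5 + C) / r ^ 2 := by positivity
                                    linarith, ?_⟩
    have h1 : (1 + (5 + C) / r ^ 2) * r ^ 2 = r ^ 2 + 5 + C := by field_simp; ring
    rw [h1]
    have : 0 ≤ (5 + C) / r ^ 2 := by positivity
    nlinarith [sq_nonneg r]
  set b : R2 → ℝ := fun y => exp (-α * ‖y - p‖ ^ 2) - exp (-α * r ^ 2) with hb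
  have hbC : ContDiff ℝ 2 b := by
    refine ContDiff.sub (ContDiff.exp ?_) contDiff_const
    exact contDiff_const.mul ((contDiff_id.sub contDiff_const).norm_sq ℝ)
  have hblap (y : R2) : lap b y = exp (-α * ‖y - p‖ ^ 2) * (4 * α * (α * ‖y - p‖ ^ 2 - 1)) := by
    have hd (c : ℝ) (s : ℝ) : HasDerivAt (fun s => c * exp (-α * s)) (c * (exp (-α * s) * -α)) s := by
      have := (((hasDerivAt_id s).const_mul (-α)).exp).const_mul c
      simpa using this
    have h1 : ∀ᶠ s in 𝓝 (‖y - p‖ ^ 2), HasDerivAt (fun s => exp (-α * s) - exp (-α * r ^ 2))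
        (-α * exp (-α * s)) s := Eventually.of_forall fun s => by
      have := (hd 1 s).sub_const (exp (-α * r ^ 2))
      simpa [mul_comm] using this
    rw [lap_radial p y h1 (hd (-α) _)]
    ring
  -- the barrier is at most `z` on the inner circle, after multiplication by a small `ε`
  obtain ⟨ε, hε, hεz⟩ : ∃ ε > 0, ∀ y ∈ sphere p (r / 2), ε ≤ z y := by
    have hne : (sphere p (r / 2)).Nonempty := NormedSpace.sphere_nonempty.2 (by linarith)
    obtain ⟨y, hy, hm⟩ := (isCompact_sphere p (r / 2)).exists_isMinOn hne hz.continuous.continuousOn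
    refine ⟨z y, hpos y ?_, fun u hu => hm hu⟩
    rw [mem_sphere] at hy; rw [mem_ball, hy]; linarith
  have hcmp : ∀ y, r / 2 ≤ ‖y - p‖ → ‖y - p‖ ≤ r → 0 ≤ z y + -ε * b y := by
    set K : Set R2 := {y | r / 2 ≤ ‖y - p‖ ∧ ‖y - p‖ ≤ r} with hK
    have hKc : IsCompact K := by
      refine (isCompact_closedBall p r).of_isClosed_subset ?_ ?_
      · have hn : Continuous fun y : R2 => ‖y - p‖ := by fun_prop
        exact (isClosed_le continuous_const hn).inter (isClosed_le hn continuous_const)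
      · intro y hy; rw [mem_closedBall, dist_eq_norm]; exact hy.2
    intro y₁ h1 h2
    have hcont : Continuous fun y => z y + -ε * b y :=
      hz.continuous.add (continuous_const.mul hbC.continuous)
    obtain ⟨y, hy, hm⟩ := hKc.exists_isMinOn ⟨y₁, h1, h2⟩ hcont.continuousOn
    suffices h : 0 ≤ z y + -ε * b y from h.trans (hm ⟨h1, h2⟩)
    by_contra! hneg
    have hyr : ‖y - p‖ < r := by
      refine lt_of_le_of_ne hy.2 fun h => ?_
      have h3 : b y = 0 := by simp [hb, h]
      have h4 := hnn y (by rw [mem_closedBall, dist_eq_norm]; exact hy.2)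
      rw [h3] at hneg; linarith
    have hyr2 : r / 2 < ‖y - p‖ := by
      refine lt_of_le_of_ne hy.1 fun h => ?_
      have h3 : b y ≤ 1 := by
        have h5 : exp (-α * ‖y - p‖ ^ 2) ≤ 1 := Real.exp_le_one_iff.2 (by nlinarith [sq_nonneg ‖y - p‖])
        have h6 := exp_pos (-α * r ^ 2)
        simp only [hb]; linarith
      have h4 := hεz y (by rw [mem_sphere, dist_eq_norm, ← h])
      nlinarith
    have hloc : IsLocalMin (fun y => z y + -ε * b y) y := by
      have h3 : ∀ᶠ u in 𝓝 y, r / 2 < ‖u - p‖ :=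
        (isOpen_lt continuous_const (by fun_prop)).mem_nhds hyr2
      have h4 : ∀ᶠ u in 𝓝 y, ‖u - p‖ < r :=
        (isOpen_lt (by fun_prop) continuous_const).mem_nhds hyr
      filter_upwards [h3, h4] with u hu1 hu2 using hm ⟨hu1.le, hu2.le⟩
    have h0 := lap_nonneg_of_isLocalMin (hz.contDiffAt.add (contDiffAt_const.mul hbC.contDiffAt)) hloc
    rw [lap_add hz.contDiffAt (contDiffAt_const.mul hbC.contDiffAt),
      lap_const_mul _ hbC.contDiffAt, hblap] at h0
    have hzl := hlap y (by rw [mem_ball, dist_eq_norm]; exact hyr)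
    have hX := exp_pos (-α * ‖y - p‖ ^ 2)
    have h5 : C < 4 * α * (α * ‖y - p‖ ^ 2 - 1) := by
      have h6 : (r / 2) ^ 2 ≤ ‖y - p‖ ^ 2 := by gcongr
      have h7 : α * r ^ 2 - 4 ≤ 4 * (α * ‖y - p‖ ^ 2 - 1) := by nlinarith
      nlinarith
    have h8 : C * b y ≤ C * exp (-α * ‖y - p‖ ^ 2) := by
      have h6 := exp_pos (-α * r ^ 2)
      exact mul_le_mul_of_nonneg_left (by simp only [hb]; linarith) hC
    have h9 : C * b y < exp (-α * ‖y - p‖ ^ 2) * (4 * α * (α * ‖y - p‖ ^ 2 - 1)) := by nlinarith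
    nlinarith
  -- differentiate the comparison along the inner normal at `q`
  have hl : HasDerivAt (fun t : ℝ => q - t • (q - p)) (-(q - p)) 0 := by
    simpa using ((hasDerivAt_id (0 : ℝ)).smul_const (q - p)).const_sub q
  have hq0 : q - (0 : ℝ) • (q - p) = q := by simp
  have hdz : HasDerivAt (fun t : ℝ => z (q - t • (q - p))) (-(fderiv ℝ z q (q - p))) 0 := by
    have h1 : HasFDerivAt z (fderiv ℝ z q) (q - (0 : ℝ) • (q - p)) := by
      rw [hq0]; exact (hz.differentiable (by norm_num) q).hasFDerivAt
    have := HasFDerivAt.comp_hasDerivAt (f := fun t : ℝ => q - t • (q - p)) (0 : ℝ) h1 hl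
    simpa [Function.comp_def] using this
  have hbt (t : ℝ) : b (q - t • (q - p)) = exp (-α * ((1 - t) ^ 2 * r ^ 2)) - exp (-α * r ^ 2) := by
    have h1 : q - t • (q - p) - p = (1 - t) • (q - p) := by module
    simp only [hb]
    rw [h1, norm_smul, mul_pow, Real.norm_eq_abs, sq_abs, hr]
  have hdb : HasDerivAt (fun t : ℝ => exp (-α * ((1 - t) ^ 2 * r ^ 2)) - exp (-α * r ^ 2))
      (exp (-α * r ^ 2) * (2 * α * r ^ 2)) 0 := by
    have := (((((hasDerivAt_id (0 : ℝ)).const_sub 1).pow 2).mul_const (r ^ 2)).const_mul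
      (-α)).exp.sub_const (exp (-α * r ^ 2))
    exact this.congr_deriv (by simp; ring)
  have hfin := deriv_nonneg_of_right (k := fun t => z (q - t • (q - p)) + -ε * b (q - t • (q - p)))
    (δ := 1 / 2) (k' := -(fderiv ℝ z q (q - p)) + -ε * (exp (-α * r ^ 2) * (2 * α * r ^ 2)))
    (by
      refine hdz.add (HasDerivAt.const_mul _ ?_)
      simpa only [hbt] using hdb)
    (by simp [hq, hb, hr]) (by norm_num) (fun t ht0 ht1 => by
      have h1 : q - t • (q - p) - p = (1 - t) • (q - p) := by module
      have h2 : ‖q - t • (q - p) - p‖ = (1 - t) * r := by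
        rw [h1, norm_smul, Real.norm_eq_abs, abs_of_pos (by linarith)]
      apply hcmp
      · rw [h2]; nlinarith
      · rw [h2]; nlinarith)
  have : 0 < ε * (exp (-α * r ^ 2) * (2 * α * r ^ 2)) := by positivity
  linarith

/-- **Strong maximum principle** for supersolutions of `Δz = C z` on a convex open set. -/
lemma strong_max {z : R2 → ℝ} (hz : ContDiff ℝ 2 z) {U : Set R2} (hU : IsOpen U)
    (hconv : Convex ℝ U) {C : ℝ} (hC : 0 ≤ C) (hnn : ∀ y ∈ U, 0 ≤ z y)
    (hlap : ∀ y ∈ U, lap z y ≤ C * z y) {q₀ : R2} (hq₀ : q₀ ∈ U) (hzq : z q₀ = 0) :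
    ∀ p ∈ U, z p = 0 := by
  by_contra! hex
  obtain ⟨p₀, hp₀, hzp⟩ := hex
  have hzc := hz.continuous
  -- first zero of `z` on the segment from `p₀` to `q₀`
  set γ : ℝ → R2 := fun t => p₀ + t • (q₀ - p₀) with hγ
  have hγc : Continuous γ := by fun_prop
  have hγU : ∀ t ∈ Icc (0 : ℝ) 1, γ t ∈ U := fun t ht =>
    hconv.add_smul_sub_mem hp₀ hq₀ ht
  set T : Set ℝ := Icc 0 1 ∩ {t | z (γ t) = 0} with hT
  have hTc : IsCompact T := isCompact_Icc.inter_right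
    (isClosed_eq (hzc.comp hγc) continuous_const)
  obtain ⟨t₁, ht₁, hmin⟩ := hTc.exists_isLeast ⟨1, ⟨by norm_num, le_refl _⟩, by simp [hγ, hzq]⟩
  have ht₁0 : 0 < t₁ := by
    refine lt_of_le_of_ne ht₁.1.1 fun h => hzp ?_
    have := ht₁.2
    rw [← h] at this
    simpa [hγ] using this
  obtain ⟨δ, hδ, hball⟩ := Metric.isOpen_iff.1 hU (γ t₁) (hγU t₁ ht₁.1)
  obtain ⟨t, ht0, htt, htd⟩ : ∃ t, 0 ≤ t ∧ t < t₁ ∧ dist (γ t) (γ t₁) < δ / 2 := by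
    have h1 : ∀ᶠ t in 𝓝[<] t₁, dist (γ t) (γ t₁) < δ / 2 :=
      (hγc.continuousAt.eventually (Metric.ball_mem_nhds (γ t₁) (half_pos hδ))).filter_mono
        nhdsWithin_le_nhds
    have h2 : ∀ᶠ t in 𝓝[<] t₁, t ∈ Ioo 0 t₁ := Ioo_mem_nhdsLT ht₁0
    obtain ⟨t, h3, h4⟩ := (h1.and h2).exists
    exact ⟨t, h4.1.le, h4.2, h3⟩
  set p := γ t with hp
  have htI : t ∈ Icc (0 : ℝ) 1 := ⟨ht0, htt.le.trans ht₁.1.2⟩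
  have hzp0 : z p ≠ 0 := fun h => absurd (hmin ⟨htI, h⟩) (not_le.2 htt)
  -- nearest zero to `p`
  set Z : Set R2 := closedBall p (dist p (γ t₁)) ∩ {y | z y = 0} with hZ
  have hZc : IsCompact Z := (isCompact_closedBall _ _).inter_right
    (isClosed_eq hzc continuous_const)
  obtain ⟨q, hqZ, hqmin⟩ := hZc.exists_isMinOn (f := fun y => dist p y)
    ⟨γ t₁, by rw [mem_closedBall, dist_comm], ht₁.2⟩ (by fun_prop)
  have hqd : dist p q ≤ dist p (γ t₁) := by rw [dist_comm p q]; exact hqZ.1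
  have hqp : q ≠ p := fun h => hzp0 (h ▸ hqZ.2)
  have hsub : closedBall p ‖q - p‖ ⊆ U := by
    intro y hy
    apply hball
    rw [mem_closedBall, ← dist_eq_norm, dist_comm q p] at hy
    rw [mem_ball]
    linarith [dist_triangle y p (γ t₁)]
  have hlt := hopf hz hqp hC (fun y hy => by
      refine lt_of_le_of_ne (hnn y (hsub (ball_subset_closedBall hy))) fun h => ?_
      rw [mem_ball, ← dist_eq_norm, dist_comm q p] at hy
      have := hqmin (⟨by rw [mem_closedBall]; linarith, h.symm⟩ : y ∈ Z)
      simp only [mem_ofPred_eq] at this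
      rw [dist_comm p y] at this
      linarith)
    (fun y hy => hnn y (hsub hy)) hqZ.2 (fun y hy => hlap y (hsub (ball_subset_closedBall hy)))
  have hqU : q ∈ U := hsub (by rw [mem_closedBall, dist_eq_norm])
  have hloc : IsLocalMin z q := by
    filter_upwards [hU.mem_nhds hqU] with y hy
    rw [show z q = 0 from hqZ.2]; exact hnn y hy
  rw [hloc.fderiv_eq_zero] at hlt
  simp at hlt

/-! ### A superharmonic weight -/

/-- A slowly growing positive weight which is strictly superharmonic near infinity. -/
def wt (x : R2) : ℝ := √(log (3 + ‖x - 0‖ ^ 2))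

lemma one_lt_log_three_add (x : R2) : 1 < log (3 + ‖x - 0‖ ^ 2) := by
  rw [Real.lt_log_iff_exp_lt (by positivity)]
  have := Real.exp_one_lt_d9
  nlinarith [sq_nonneg ‖x - 0‖]

lemma wt_pos (x : R2) : 0 < wt x := Real.sqrt_pos.2 (by linarith [one_lt_log_three_add x])

lemma contDiff_wt : ContDiff ℝ 2 wt := by
  have h1 : ContDiff ℝ 2 fun x : R2 => 3 + ‖x - 0‖ ^ 2 :=
    contDiff_const.add ((contDiff_id.sub contDiff_const).norm_sq ℝ)
  have h2 : ContDiff ℝ 2 fun x : R2 => log (3 + ‖x - 0‖ ^ 2) := h1.log fun x => by positivity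
  exact h2.sqrt fun x => by linarith [one_lt_log_three_add x]

lemma lap_wt (x : R2) : lap wt x =
    (6 * log (3 + ‖x‖ ^ 2) - ‖x‖ ^ 2) / (wt x ^ 3 * (3 + ‖x‖ ^ 2) ^ 2) := by
  have hF (s : ℝ) (hs : 1 < log (3 + s)) (hs3 : 0 < 3 + s) : HasDerivAt (fun s => √(log (3 + s)))
      (1 / (2 * √(log (3 + s)) * (3 + s))) s := by
    have := (((hasDerivAt_id s).const_add 3).log hs3.ne').sqrt (by simpa using (lt_trans one_pos hs).ne')
    refine this.congr_deriv ?_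
    simp
    field_simp
  have hev : ∀ᶠ s in 𝓝 (‖x - 0‖ ^ 2), 1 < log (3 + s) ∧ 0 < 3 + s := by
    have hc : ContinuousAt (fun s => log (3 + s)) (‖x - 0‖ ^ 2) :=
      ContinuousAt.log (by fun_prop) (by positivity)
    refine (hc.eventually_const_lt (one_lt_log_three_add x)).and ?_
    have hc2 : ContinuousAt (fun s : ℝ => 3 + s) (‖x - 0‖ ^ 2) := by fun_prop
    exact hc2.eventually_const_lt (by positivity)
  have hL := one_lt_log_three_add x
  have hS : 0 < 3 + ‖x - 0‖ ^ 2 := by positivity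
  set s := ‖x - 0‖ ^ 2 with hs
  set q := √(log (3 + s)) with hq
  have hq0 : 0 < q := wt_pos x
  have hq2 : q ^ 2 = log (3 + s) := Real.sq_sqrt (by linarith)
  have h2 : HasDerivAt (fun s => 1 / (2 * √(log (3 + s)) * (3 + s)))
      (-(1 / q + 2 * q) / (2 * q * (3 + s)) ^ 2) s := by
    have h3 := (((hF s hL hS).const_mul 2).mul ((hasDerivAt_id s).const_add 3)).inv
      (by simp only [Pi.mul_apply]; positivity)
    simp only [one_div] at h3 ⊢
    refine h3.congr_deriv ?_
    simp [← hq]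
    field_simp
  have := lap_radial 0 x (hev.mono fun s h => hF s h.1 h.2) h2
  have hw : wt = fun y => √(log (3 + ‖y - 0‖ ^ 2)) := rfl
  have hwx : wt x = q := rfl
  rw [hwx, hw, this, ← hs]
  have hsx : ‖x‖ ^ 2 = s := by rw [hs, sub_zero]
  rw [hsx, ← hq, ← hq2]
  field_simp
  ring

/-- The decay `exp w ≤ C |x|^(-β)` with `β > 2` makes `wt` a strict supersolution, outside a disc,
of the linear equation `Δφ + exp(w) φ = 0`. -/
lemma exists_wt_super {w : R2 → ℝ} {K β : ℝ} (hβ : 2 < β)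
    (hdec : ∀ x, w x ≤ K - β * log (1 + ‖x‖)) :
    ∃ R₀ : ℝ, 0 < R₀ ∧ ∀ x : R2, R₀ ≤ ‖x‖ → lap wt x + exp (w x) * wt x < 0 := by
  set g := β / 2 - 1 with hg
  have hg0 : 0 < g := by rw [hg]; linarith
  set K' := exp K * 3 ^ (β / 2) with hK'
  have hK'0 : 0 < K' := by positivity
  have t1 : Tendsto (fun S : ℝ => log S ^ 2 / S ^ g) atTop (𝓝 0) :=
    ((isLittleO_log_rpow_rpow_atTop 2 hg0).tendsto_div_nhds_zero).congr fun S => by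
      rw [Real.rpow_two]
  have t2 : Tendsto (fun S : ℝ => log S / S) atTop (𝓝 0) := by
    have := (isLittleO_log_rpow_atTop (r := 1) one_pos).tendsto_div_nhds_zero
    simpa using this
  have t3 : Tendsto (fun S : ℝ => 3 / S + 6 * (log S / S) + K' * (log S ^ 2 / S ^ g)) atTop (𝓝 0) := by
    have := ((tendsto_const_nhds (x := (3 : ℝ))).div_atTop tendsto_id).add
      ((t2.const_mul 6).add (t1.const_mul K'))
    simpa [add_assoc] using this
  obtain ⟨S₀, hS₀⟩ := eventually_atTop.1 (t3.eventually_lt_const one_pos)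
  refine ⟨1 + |S₀|, by positivity, fun x hx => ?_⟩
  have hL := one_lt_log_three_add x
  have hq0 := wt_pos x
  have hq2 : wt x ^ 2 = log (3 + ‖x - 0‖ ^ 2) := Real.sq_sqrt (by linarith)
  rw [sub_zero] at hL hq2
  rw [lap_wt]
  set S := 3 + ‖x‖ ^ 2 with hS
  have hS0 : 0 < S := by positivity
  have hSS : S₀ ≤ S := by
    have := le_abs_self S₀
    nlinarith [abs_nonneg S₀]
  have h1 := hS₀ S hSS
  set q := wt x
  have hexp : exp (w x) ≤ K' * S ^ (-(β / 2)) := by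
    have h2 : exp (w x) ≤ exp K * (1 + ‖x‖) ^ (-β) := by
      rw [Real.rpow_def_of_pos (by positivity), ← Real.exp_add]
      exact Real.exp_le_exp.2 (by linarith [hdec x])
    have h3 : (1 + ‖x‖) ^ (-β) ≤ 3 ^ (β / 2) * S ^ (-(β / 2)) := by
      have h4 : S / 3 ≤ (1 + ‖x‖) ^ 2 := by rw [hS]; nlinarith [norm_nonneg x, sq_nonneg ‖x‖]
      have h5 : (1 + ‖x‖) ^ (-β) = ((1 + ‖x‖) ^ 2) ^ (-(β / 2)) := by
        rw [← Real.rpow_natCast, ← Real.rpow_mul (by positivity)]; congr 1; push_cast; ring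
      rw [h5]
      refine (Real.rpow_le_rpow_of_nonpos (by positivity) h4 (by linarith)).trans (le_of_eq ?_)
      rw [Real.div_rpow hS0.le (by norm_num), Real.rpow_neg (by norm_num : (0 : ℝ) ≤ 3)]
      field_simp
    calc _ ≤ _ := h2
      _ ≤ exp K * (3 ^ (β / 2) * S ^ (-(β / 2))) := by gcongr
      _ = _ := by rw [hK']; ring
  have hSg : S ^ (-(β / 2)) = 1 / (S ^ g * S) := by
    have : -(β / 2) = -(g + 1) := by rw [hg]; ring
    rw [this, Real.rpow_neg hS0.le, Real.rpow_add_one hS0.ne', one_div]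
  have hgp : 0 < S ^ g := by positivity
  -- the claim, cleared of denominators
  have key : K' * (log S) ^ 2 * S / S ^ g < S - 3 - 6 * log S := by
    have h5 := mul_lt_mul_of_pos_right h1 hS0
    have h6 : (3 / S + 6 * (log S / S) + K' * (log S ^ 2 / S ^ g)) * S
      = 3 + 6 * log S + K' * (log S) ^ 2 * S / S ^ g := by field_simp
    rw [h6] at h5; linarith
  have hx2 : ‖x‖ ^ 2 = S - 3 := by rw [hS]; ring
  rw [hx2]
  have h7 : exp (w x) * q ≤ (K' * (log S) ^ 2 * S / S ^ g) / (q ^ 3 * S ^ 2) := by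
    calc exp (w x) * q ≤ K' * S ^ (-(β / 2)) * q := by gcongr
      _ = _ := by
        rw [hSg, ← hq2]; field_simp
  have h8 : (K' * (log S) ^ 2 * S / S ^ g) / (q ^ 3 * S ^ 2)
      < (S - 3 - 6 * log S) / (q ^ 3 * S ^ 2) := by gcongr
  have h9 : (6 * log S - (S - 3)) / (q ^ 3 * S ^ 2) = -((S - 3 - 6 * log S) / (q ^ 3 * S ^ 2)) := by
    ring
  rw [h9]; linarith

/-- The weight tends to infinity. -/
lemma exists_lt_wt (M : ℝ) : ∃ ρ : ℝ, 0 < ρ ∧ ∀ x : R2, ρ ≤ ‖x‖ → M < wt x := by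
  have t : Tendsto (fun r : ℝ => √(log (3 + r ^ 2))) atTop atTop := by
    refine Real.tendsto_sqrt_atTop.comp (Real.tendsto_log_atTop.comp ?_)
    exact tendsto_atTop_add_const_left _ _ (tendsto_pow_atTop two_ne_zero)
  obtain ⟨ρ, hρ⟩ := eventually_atTop.1 (t.eventually_gt_atTop M)
  refine ⟨1 + |ρ|, by positivity, fun x hx => ?_⟩
  have := hρ ‖x‖ (by linarith [le_abs_self ρ])
  simpa [wt] using this

/-! ### Moving planes -/

/-- The difference between the reflection of `w` and `w` itself. -/
def rdiff (w : R2 → ℝ) (e : R2) (l : ℝ) (y : R2) : ℝ := w (rfl2 e l y) + -1 * w y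

lemma contDiff_rdiff {w : R2 → ℝ} (hw : ContDiff ℝ 2 w) (e : R2) (l : ℝ) :
    ContDiff ℝ 2 (rdiff w e l) :=
  (hw.comp ((contDiff_rfl2 e l).of_le le_top)).add (contDiff_const.mul hw)

lemma lap_rdiff {w : R2 → ℝ} (hw : ContDiff ℝ 2 w)
    (heq : ∀ x : R2, lap w x + exp (w x) * (1 - exp (w x)) = 0) {e : R2} (he : ‖e‖ = 1) (l : ℝ)
    (y : R2) : lap (rdiff w e l) y =
      (exp (w y) - exp (w (rfl2 e l y))) - (exp (w y) ^ 2 - exp (w (rfl2 e l y)) ^ 2) := by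
  unfold rdiff
  have h1 : ContDiff ℝ 2 fun y => w (rfl2 e l y) := hw.comp ((contDiff_rfl2 e l).of_le le_top)
  rw [lap_add h1.contDiffAt (contDiffAt_const.mul hw.contDiffAt), lap_const_mul _ hw.contDiffAt,
    lap_rfl2 hw he]
  linarith [heq y, heq (rfl2 e l y)]

lemma exp_sub_exp_le (a b : ℝ) : exp b - exp a ≤ exp b * (b - a) := by
  have h1 : exp a = exp b * exp (a - b) := by rw [← Real.exp_add]; congr 1; ring
  have h2 := Real.add_one_le_exp (a - b)
  have h3 := exp_pos b
  rw [h1]; nlinarith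

/-- Negative values of the reflected difference are already visible in a fixed disc: otherwise
compare with the supersolution `wt` at a minimum point of `rdiff / wt`. -/
lemma exists_rdiff_neg_small {w : R2 → ℝ} (hw : ContDiff ℝ 2 w)
    (heq : ∀ x : R2, lap w x + exp (w x) * (1 - exp (w x)) = 0) {R₀ β K : ℝ} (hβ : 0 ≤ β)
    (hsup : ∀ x : R2, R₀ ≤ ‖x‖ → lap wt x + exp (w x) * wt x < 0)
    (hK : ∀ x, |w x + β * log (1 + ‖x‖)| ≤ K) {e : R2} (he : ‖e‖ = 1) (l : ℝ)
    (hex : ∃ x, l < ⟪x, e⟫ ∧ w (rfl2 e l x) < w x) :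
    ∃ x, l < ⟪x, e⟫ ∧ w (rfl2 e l x) < w x ∧ ‖x‖ < R₀ := by
  obtain ⟨x₁, hx₁, hwx₁⟩ := hex
  set z := rdiff w e l with hz
  have hzC : ContDiff ℝ 2 z := contDiff_rdiff hw e l
  have hz1 : z x₁ < 0 := by simp only [hz, rdiff]; linarith
  set M := 2 * K + β * log (1 + 2 * |l|) with hM
  have hzM (y : R2) : -M ≤ z y := by
    have h1 := abs_le.1 (hK (rfl2 e l y))
    have h2 := abs_le.1 (hK y)
    have h3 : log (1 + ‖rfl2 e l y‖) ≤ log (1 + ‖y‖) + log (1 + 2 * |l|) := by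
      rw [← Real.log_mul (by positivity) (by positivity)]
      apply Real.log_le_log (by positivity)
      nlinarith [norm_rfl2_le he l y, norm_nonneg y, abs_nonneg l,
        mul_nonneg (norm_nonneg y) (abs_nonneg l)]
    have h4 := mul_le_mul_of_nonneg_left h3 hβ
    simp only [hz, rdiff, hM]; linarith
  set μ := -z x₁ / wt x₁ with hμ
  have hμ0 : 0 < μ := div_pos (by linarith) (wt_pos _)
  obtain ⟨ρ, -, hρ⟩ := exists_lt_wt (M / μ)
  have hfar (x : R2) (hx : ρ ≤ ‖x‖) : -μ < z x / wt x := by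
    have h1 := hρ x hx
    rw [div_lt_iff₀ hμ0] at h1
    rw [lt_div_iff₀ (wt_pos x)]
    linarith [hzM x]
  have hμ1 : z x₁ / wt x₁ = -μ := by rw [hμ]; ring
  have hx1ρ : ‖x₁‖ < ρ := by
    by_contra! h
    exact absurd (hfar x₁ h) (by rw [hμ1]; exact lt_irrefl _)
  have hic : Continuous fun x : R2 => ⟪x, e⟫ := by fun_prop
  have hcomp : IsCompact (closedBall (0 : R2) ρ ∩ {x | l ≤ ⟪x, e⟫}) :=
    (isCompact_closedBall _ _).inter_right (isClosed_le continuous_const hic)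
  have hcont : Continuous fun x => z x / wt x :=
    hzC.continuous.div contDiff_wt.continuous fun x => (wt_pos x).ne'
  obtain ⟨y, hy, hmin⟩ := hcomp.exists_isMinOn ⟨x₁, by simpa using hx1ρ.le, hx₁.le⟩
    hcont.continuousOn
  have hy1 : z y / wt y ≤ -μ := by
    rw [← hμ1]; exact hmin ⟨by simpa using hx1ρ.le, hx₁.le⟩
  have hglob (x : R2) (hx : l ≤ ⟪x, e⟫) : z y / wt y ≤ z x / wt x := by
    rcases le_or_gt ρ ‖x‖ with h | h
    · exact hy1.trans (hfar x h).le
    · exact hmin ⟨by simpa using h.le, hx⟩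
  set ν := -(z y / wt y) with hν
  have hν0 : 0 < ν := by linarith
  have hzy : z y = -ν * wt y := by rw [hν]; field_simp [(wt_pos y).ne']
  have hzy0 : z y < 0 := by rw [hzy]; nlinarith [wt_pos y]
  have hly : l < ⟪y, e⟫ := by
    refine lt_of_le_of_ne hy.2 fun h => ?_
    have : z y = 0 := by simp [hz, rdiff, rfl2_eq_self h.symm]
    linarith
  have hloc : IsLocalMin (fun x => z x + ν * wt x) y := by
    filter_upwards [(isOpen_lt continuous_const hic).mem_nhds hly] with x hx
    have h1 := hglob x (le_of_lt hx)
    rw [le_div_iff₀ (wt_pos x)] at h1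
    rw [hzy]; linarith
  have h0 := lap_nonneg_of_isLocalMin
    (hzC.contDiffAt.add (contDiffAt_const.mul contDiff_wt.contDiffAt)) hloc
  rw [lap_add hzC.contDiffAt (contDiffAt_const.mul contDiff_wt.contDiffAt),
    lap_const_mul _ contDiff_wt.contDiffAt, lap_rdiff hw heq he] at h0
  have hlt : w (rfl2 e l y) < w y := by simp only [hz, rdiff] at hzy0; linarith
  refine ⟨y, hly, hlt, ?_⟩
  by_contra! hR
  have h1 := hsup y hR
  have h2 := exp_sub_exp_le (w (rfl2 e l y)) (w y)
  have h3 : exp (w (rfl2 e l y)) ^ 2 ≤ exp (w y) ^ 2 := by gcongr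
  have h4 : w y - w (rfl2 e l y) = ν * wt y := by simp only [hz, rdiff] at hzy; linarith
  rw [h4] at h2
  nlinarith

/-- At a position of the plane where the reflected difference is nonnegative, it either vanishes
identically, or is positive, with a nonzero normal derivative on the line of reflection. -/
lemma rdiff_dichotomy {w : R2 → ℝ} (hw : ContDiff ℝ 2 w)
    (heq : ∀ x : R2, lap w x + exp (w x) * (1 - exp (w x)) = 0) (hnp : ∀ x, w x ≤ 0)
    {e : R2} (he : ‖e‖ = 1) (l : ℝ) (hnn : ∀ x, l < ⟪x, e⟫ → w x ≤ w (rfl2 e l x)) :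
    (∀ x, w (rfl2 e l x) = w x) ∨
      ((∀ x, l < ⟪x, e⟫ → w x < w (rfl2 e l x)) ∧ ∀ x, ⟪x, e⟫ = l → fderiv ℝ w x e < 0) := by
  set z := rdiff w e l with hz
  have hzC : ContDiff ℝ 2 z := contDiff_rdiff hw e l
  have hznn (y : R2) (hy : l < ⟪y, e⟫) : 0 ≤ z y := by
    have := hnn y hy; simp only [hz, rdiff]; linarith
  have hlap (y : R2) (hy : l < ⟪y, e⟫) : lap z y ≤ 2 * z y := by
    have h0 := hnn y hy
    rw [hz, lap_rdiff hw heq he, rdiff]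
    have h1 : exp (w y) ≤ exp (w (rfl2 e l y)) := Real.exp_le_exp.2 h0
    have h2 : exp (w (rfl2 e l y)) ≤ 1 := Real.exp_le_one_iff.2 (hnp _)
    have h3 := exp_sub_exp_le (w y) (w (rfl2 e l y))
    have h4 := exp_pos (w y)
    have h5 := exp_pos (w (rfl2 e l y))
    set a := w (rfl2 e l y)
    set b := w y
    have h6 : exp a - exp b ≤ a - b := by nlinarith
    nlinarith
  have hic : Continuous fun x : R2 => ⟪x, e⟫ := by fun_prop
  by_cases hq : ∃ q₀, l < ⟪q₀, e⟫ ∧ z q₀ = 0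
  · obtain ⟨q₀, hq₀, hzq⟩ := hq
    left
    have hconv : Convex ℝ {x : R2 | l < ⟪x, e⟫} := by
      have : IsLinearMap ℝ fun x : R2 => ⟪x, e⟫ :=
        ⟨fun x y => inner_add_left _ _ _, fun c x => by rw [real_inner_smul_left]; rfl⟩
      exact convex_halfSpace_gt this l
    have h1 := strong_max hzC (isOpen_lt continuous_const hic) hconv zero_le_two hznn hlap hq₀ hzq
    have h2 (x : R2) (hx : l < ⟪x, e⟫) : w (rfl2 e l x) = w x := by
      have := h1 x hx; simp only [hz, rdiff] at this; linarith
    intro x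
    rcases lt_trichotomy l ⟪x, e⟫ with h | h | h
    · exact h2 x h
    · rw [rfl2_eq_self h.symm]
    · have := h2 (rfl2 e l x) (by rw [inner_rfl2 he]; linarith)
      rw [rfl2_rfl2 he] at this; exact this.symm
  · right
    push Not at hq
    have hzpos (y : R2) (hy : l < ⟪y, e⟫) : 0 < z y := lt_of_le_of_ne (hznn y hy) (hq y hy).symm
    refine ⟨fun x hx => by have := hzpos x hx; simp only [hz, rdiff] at this; linarith, ?_⟩
    intro x hx
    have hee : ⟪e, e⟫ = 1 := by rw [real_inner_self_eq_norm_sq, he]; norm_num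
    have hn : ‖x - (x + e)‖ = 1 := by rw [sub_add_cancel_left, norm_neg, he]
    have hin (y : R2) : l - ⟪y, e⟫ ≤ ‖y - (x + e)‖ - 1 := by
      have h1 := real_inner_le_norm (y - (x + e)) (-e)
      rw [inner_neg_right, inner_sub_left, inner_add_left, hee, hx, norm_neg, he] at h1
      linarith
    have hzx : z x = 0 := by simp [hz, rdiff, rfl2_eq_self hx]
    have hxp : x ≠ x + e := by
      intro h; rw [← h] at hn; simp at hn
    have hball (y : R2) (hy : y ∈ ball (x + e) ‖x - (x + e)‖) : l < ⟪y, e⟫ := by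
      rw [hn, mem_ball, dist_eq_norm] at hy; linarith [hin y]
    have hh := hopf hzC hxp zero_le_two (fun y hy => hzpos y (hball y hy))
      (fun y hy => by
        rw [hn, mem_closedBall, dist_eq_norm] at hy
        rcases (show l ≤ ⟪y, e⟫ by linarith [hin y]).lt_or_eq with h | h
        · exact (hzpos y h).le
        · simp [hz, rdiff, rfl2_eq_self h.symm]) hzx
      (fun y hy => hlap y (hball y hy))
    have hw1 : Differentiable ℝ w := hw.differentiable (by norm_num)
    have hd : HasFDerivAt (fun y => w (rfl2 e l y))
        ((fderiv ℝ w x).comp ((rflLin e).toContinuousLinearEquiv : R2 →L[ℝ] R2)) x := by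
      have h1 : HasFDerivAt w (fderiv ℝ w x) (rfl2 e l x) := by
        rw [rfl2_eq_self hx]; exact (hw1 x).hasFDerivAt
      exact h1.comp x (hasFDerivAt_rfl2 he l x)
    have hre : rflLin e e = -e := by
      have := rfl2_eq he 0 e
      simp only [rfl2, hee, mul_zero, zero_smul, add_zero] at this
      rw [← this]; module
    have hd2 : fderiv ℝ z x = _ := (hd.add ((hw1 x).hasFDerivAt.const_mul (-1))).fderiv
    rw [hd2, sub_add_cancel_left] at hh
    simp [hre] at hh
    linarith

/-- The moving plane argument in the direction `e`. -/
lemma moving_planes {w : R2 → ℝ} (hw : ContDiff ℝ 2 w)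
    (heq : ∀ x : R2, lap w x + exp (w x) * (1 - exp (w x)) = 0) (hnp : ∀ x, w x ≤ 0)
    (hinf : ∀ M, ∃ r, ∀ x : R2, r ≤ ‖x‖ → w x < M) {R₀ : ℝ} {e : R2} (he : ‖e‖ = 1)
    (hsmall : ∀ l, (∃ x, l < ⟪x, e⟫ ∧ w (rfl2 e l x) < w x) →
      ∃ x, l < ⟪x, e⟫ ∧ w (rfl2 e l x) < w x ∧ ‖x‖ < R₀) :
    ∃ l₀, (∀ x, w (rfl2 e l₀ x) = w x) ∧ ∀ l, l₀ < l → ∀ x, l < ⟪x, e⟫ → w x < w (rfl2 e l x) := by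
  have hwc := hw.continuous
  have hrc := continuous_rfl2 e
  set S : Set ℝ := {l | ∀ m, l ≤ m → ∀ x, m < ⟪x, e⟫ → w x ≤ w (rfl2 e m x)} with hS
  have hSne : R₀ ∈ S := by
    intro m hm x hx
    by_contra! hlt
    obtain ⟨y, h1, -, h3⟩ := hsmall m ⟨x, hx, hlt⟩
    have := real_inner_le_norm y e
    rw [he] at this; linarith
  have hSbdd : BddBelow S := by
    obtain ⟨r, hr⟩ := hinf (w 0)
    refine ⟨-(|r| + 1), fun l hl => ?_⟩
    by_contra! hlt
    have hl0 : l < 0 := by linarith [abs_nonneg r]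
    have h1 := hl l le_rfl 0 (by simpa using hl0)
    have h2 : rfl2 e l 0 = (2 * l) • e := by simp [rfl2]
    have h3 : ‖rfl2 e l 0‖ = -(2 * l) := by
      rw [h2, norm_smul, he, mul_one, Real.norm_eq_abs, abs_of_neg (by linarith)]
    have h4 := hr (rfl2 e l 0) (by rw [h3]; linarith [le_abs_self r])
    linarith
  set l₀ := sInf S with hl₀
  have hgt (m : ℝ) (hm : l₀ < m) (x : R2) (hx : m < ⟪x, e⟫) : w x ≤ w (rfl2 e m x) := by
    obtain ⟨s, hs, hsm⟩ := exists_lt_of_csInf_lt ⟨R₀, hSne⟩ hm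
    exact hs m hsm.le x hx
  have hge (x : R2) (hx : l₀ < ⟪x, e⟫) : w x ≤ w (rfl2 e l₀ x) := by
    have hc : Continuous fun m => w (rfl2 e m x) :=
      hwc.comp (hrc.comp (continuous_id.prodMk continuous_const))
    refine ge_of_tendsto (hc.continuousWithinAt (s := Ioi l₀) (x := l₀)) ?_
    filter_upwards [Ioo_mem_nhdsGT hx] with m hm using hgt m hm.1 x hm.2
  have hsym : ∀ x, w (rfl2 e l₀ x) = w x := by
    refine (rdiff_dichotomy hw heq hnp he l₀ hge).resolve_right ?_
    rintro ⟨hpos, hder⟩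
    -- the plane cannot be moved beyond `l₀`: points violating the inequality accumulate at `x'`
    have hseq (n : ℕ) : ∃ m x, l₀ - 1 / ((n : ℝ) + 1) ≤ m ∧ m ≤ l₀ ∧ m < ⟪x, e⟫ ∧
        w (rfl2 e m x) < w x ∧ ‖x‖ < R₀ := by
      have h1 : l₀ - 1 / ((n : ℝ) + 1) ∉ S := by
        refine notMem_of_lt_csInf ?_ hSbdd
        have : (0 : ℝ) < 1 / ((n : ℝ) + 1) := by positivity
        linarith
      simp only [hS, mem_ofPred_eq] at h1
      push Not at h1
      obtain ⟨m, hm, x, hx, hwx⟩ := h1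
      obtain ⟨y, hy1, hy2, hy3⟩ := hsmall m ⟨x, hx, hwx⟩
      refine ⟨m, y, hm, ?_, hy1, hy2, hy3⟩
      by_contra! h
      exact absurd (hgt m h y hy1) (not_le.2 hy2)
    choose m x hm1 hm2 hx1 hx2 hx3 using hseq
    have hmt : Tendsto m atTop (𝓝 l₀) := by
      refine tendsto_of_tendsto_of_tendsto_of_le_of_le ?_ tendsto_const_nhds hm1 hm2
      simpa using (tendsto_one_div_add_atTop_nhds_zero_nat (𝕜 := ℝ)).const_sub l₀
    obtain ⟨x', -, φ, hφ, hxt⟩ := (isCompact_closedBall (0 : R2) R₀).tendsto_subseq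
      (x := x) fun n => by simpa using (hx3 n).le
    have hmt' := hmt.comp hφ.tendsto_atTop
    have hrt : Tendsto (fun n => rfl2 e (m (φ n)) (x (φ n))) atTop (𝓝 (rfl2 e l₀ x')) :=
      (hrc.tendsto (l₀, x')).comp (hmt'.prodMk_nhds hxt)
    have hle : l₀ ≤ ⟪x', e⟫ := by
      have hic : Continuous fun x : R2 => ⟪x, e⟫ := by fun_prop
      exact le_of_tendsto_of_tendsto' hmt' ((hic.tendsto x').comp hxt) fun n => (hx1 (φ n)).le
    have hwle : w (rfl2 e l₀ x') ≤ w x' :=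
      le_of_tendsto_of_tendsto' ((hwc.tendsto _).comp hrt) ((hwc.tendsto _).comp hxt)
        fun n => (hx2 (φ n)).le
    rcases hle.lt_or_eq with h | h
    · exact absurd (hpos x' h) (not_lt.2 hwle)
    · have hneg := hder x' h.symm
      rw [rfl2_eq_self h.symm] at hrt
      have hfc : Continuous fun y => fderiv ℝ w y e :=
        (hw.continuous_fderiv (by norm_num)).clm_apply continuous_const
      obtain ⟨ε, hε, hb⟩ := Metric.isOpen_iff.1 (isOpen_lt hfc continuous_const) x' hneg
      obtain ⟨n, hn1, hn2⟩ := ((hxt.eventually (ball_mem_nhds x' hε)).and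
        (hrt.eventually (ball_mem_nhds x' hε))).exists
      obtain ⟨c, hc, hceq⟩ := domain_mvt (f := w) (f' := fun y => fderiv ℝ w y)
        (s := ball x' ε) (fun y _ => (hw.differentiable (by norm_num) y).hasFDerivAt.hasFDerivWithinAt)
        (convex_ball x' ε) hn2 hn1
      have hcb : fderiv ℝ w c e < 0 := hb ((convex_ball x' ε).segment_subset hn2 hn1 hc)
      have h5 : (x ∘ φ) n - rfl2 e (m (φ n)) (x (φ n)) = (2 * (⟪x (φ n), e⟫ - m (φ n))) • e := by
        simp only [rfl2, Function.comp]; module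
      rw [h5, map_smul, smul_eq_mul] at hceq
      have h6 := hx2 (φ n)
      have h7 := hx1 (φ n)
      have h8 : 2 * (⟪x (φ n), e⟫ - m (φ n)) * fderiv ℝ w c e < 0 :=
        mul_neg_of_pos_of_neg (by linarith) hcb
      simp only [Function.comp] at hceq
      linarith
  refine ⟨l₀, hsym, fun l hl => ?_⟩
  refine ((rdiff_dichotomy hw heq hnp he l (hgt l hl)).resolve_left fun hsym2 => ?_).1
  -- two distinct parallel axes of symmetry would make `w` periodic
  have hper (y : R2) : w (y + (2 * (l - l₀)) • e) = w y := by
    have h1 : rfl2 e l (rfl2 e l₀ y) = y + (2 * (l - l₀)) • e := by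
      have h := inner_rfl2 he l₀ y
      rw [rfl2, h, rfl2]; module
    rw [← h1, hsym2, hsym]
  have hper2 (n : ℕ) : w ((n : ℝ) • (2 * (l - l₀)) • e) = w 0 := by
    induction n with
    | zero => simp
    | succ n ih => rw [← ih, ← hper ((n : ℝ) • _)]; congr 1; push_cast; module
  obtain ⟨r, hr⟩ := hinf (w 0)
  have hp : 0 < 2 * (l - l₀) := by linarith
  obtain ⟨n, hn⟩ := exists_nat_ge (r / (2 * (l - l₀)))
  have := hr ((n : ℝ) • (2 * (l - l₀)) • e) (by
    rw [div_le_iff₀ hp] at hn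
    rw [norm_smul, norm_smul, he, mul_one, Real.norm_eq_abs, Real.norm_eq_abs,
      abs_of_pos hp, abs_of_nonneg (by positivity)]
    exact hn)
  rw [hper2] at this
  exact lt_irrefl _ this

/-- Symmetry in every direction yields radial symmetry. -/
lemma radial_of_moving_planes {w : R2 → ℝ} (hw : Continuous w)
    (hinf : ∀ M, ∃ r, ∀ x : R2, r ≤ ‖x‖ → w x < M)
    (hmp : ∀ e : R2, ‖e‖ = 1 → ∃ l₀, (∀ x, w (rfl2 e l₀ x) = w x) ∧
      ∀ l, l₀ < l → ∀ x, l < ⟪x, e⟫ → w x < w (rfl2 e l x)) :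
    ∃ (x₀ : R2) (W : ℝ → ℝ), StrictAntiOn W (Set.Ici 0) ∧ ∀ x : R2, w x = W ‖x - x₀‖ := by
  have hlim : Tendsto w (cocompact R2) atBot := by
    refine tendsto_atBot.2 fun M => ?_
    obtain ⟨r, hr⟩ := hinf M
    filter_upwards [tendsto_norm_cocompact_atTop.eventually_ge_atTop r] with x hx
    exact (hr x hx).le
  obtain ⟨x₀, hx₀⟩ := hw.exists_forall_ge hlim
  have key (e : R2) (he : ‖e‖ = 1) : (∀ x, w (rfl2 e ⟪x₀, e⟫ x) = w x) ∧
      ∀ l, ⟪x₀, e⟫ < l → ∀ x, l < ⟪x, e⟫ → w x < w (rfl2 e l x) := by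
    obtain ⟨l₀, h1, h2⟩ := hmp e he
    have h3 (y : R2) (hy : w y = w x₀) : ¬ l₀ < ⟪y, e⟫ := fun h => by
      have := h2 ((l₀ + ⟪y, e⟫) / 2) (by linarith) y (by linarith)
      rw [hy] at this
      exact absurd (hx₀ _) (not_le.2 this)
    have h4 : ⟪x₀, e⟫ = l₀ := by
      refine le_antisymm (not_lt.1 (h3 x₀ rfl)) ?_
      have := h3 (rfl2 e l₀ x₀) (h1 x₀)
      rw [inner_rfl2 he] at this
      linarith
    rw [h4]; exact ⟨h1, h2⟩
  have hrad (x y : R2) (h : ‖x - x₀‖ = ‖y - x₀‖) : w x = w y := by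
    by_cases hxy : x = y
    · rw [hxy]
    have hn : 0 < ‖x - y‖ := norm_pos_iff.2 (sub_ne_zero.2 hxy)
    set e := (‖x - y‖⁻¹ : ℝ) • (x - y) with hedef
    have he : ‖e‖ = 1 := by rw [hedef, norm_smul, norm_inv, norm_norm]; field_simp
    have h1 : ⟪x - x₀, x - y⟫ = ‖x - y‖ ^ 2 / 2 := by
      have h2 : x - y = (x - x₀) - (y - x₀) := by abel
      have h3 := norm_sub_sq_real (x - x₀) (y - x₀)
      rw [← h2] at h3
      rw [h2, inner_sub_right, real_inner_self_eq_norm_sq, ← h2, h3, h]; ring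
    have h2 : ⟪x₀, e⟫ - ⟪x, e⟫ = -(‖x - y‖ / 2) := by
      rw [← inner_sub_left, hedef, real_inner_smul_right, ← neg_sub x x₀, inner_neg_left, h1]
      field_simp
    have h3 : rfl2 e ⟪x₀, e⟫ x = y := by
      rw [rfl2, h2, hedef, smul_smul]
      have : 2 * -(‖x - y‖ / 2) * ‖x - y‖⁻¹ = -1 := by field_simp
      rw [this]; module
    rw [← (key e he).1 x, h3]
  set e₁ : R2 := EuclideanSpace.single 0 1
  have he₁ : ‖e₁‖ = 1 := by simp [e₁]
  have hee : ⟪e₁, e₁⟫ = 1 := by rw [real_inner_self_eq_norm_sq, he₁]; norm_num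
  refine ⟨x₀, fun r => w (x₀ + r • e₁), fun s hs t ht hst => ?_, fun x => ?_⟩
  · have hs0 : 0 ≤ s := hs
    have h1 : ⟪x₀ + t • e₁, e₁⟫ = ⟪x₀, e₁⟫ + t := by
      rw [inner_add_left, real_inner_smul_left, hee, mul_one]
    have := (key e₁ he₁).2 (⟪x₀, e₁⟫ + (s + t) / 2) (by linarith) (x₀ + t • e₁)
      (by rw [h1]; linarith)
    have h2 : rfl2 e₁ (⟪x₀, e₁⟫ + (s + t) / 2) (x₀ + t • e₁) = x₀ + s • e₁ := by
      rw [rfl2, h1]; module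
    rwa [h2] at this
  · apply hrad
    rw [add_sub_cancel_left, norm_smul, he₁, mul_one, norm_norm]

/-- Radial symmetry of solutions with logarithmic behaviour at infinity. -/
lemma radial_of_log_asymptotics {w : R2 → ℝ} (hw : ContDiff ℝ 2 w)
    (heq : ∀ x : R2, lap w x + exp (w x) * (1 - exp (w x)) = 0) (hnp : ∀ x, w x ≤ 0)
    {β K : ℝ} (hβ : 2 < β) (hK : ∀ x, |w x + β * log (1 + ‖x‖)| ≤ K) :
    ∃ (x₀ : R2) (W : ℝ → ℝ), StrictAntiOn W (Set.Ici 0) ∧ ∀ x : R2, w x = W ‖x - x₀‖ := by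
  have hdec (x : R2) : w x ≤ K - β * log (1 + ‖x‖) := by linarith [(abs_le.1 (hK x)).2]
  have hinf (M : ℝ) : ∃ r, ∀ x : R2, r ≤ ‖x‖ → w x < M := by
    have t : Tendsto (fun r : ℝ => log (1 + r)) atTop atTop :=
      Real.tendsto_log_atTop.comp (tendsto_atTop_add_const_left _ _ tendsto_id)
    obtain ⟨r, hr⟩ := eventually_atTop.1 (t.eventually_gt_atTop ((K - M) / β))
    refine ⟨r, fun x hx => ?_⟩
    have h1 := hr ‖x‖ hx
    rw [div_lt_iff₀ (by linarith)] at h1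
    linarith [hdec x]
  obtain ⟨R₀, -, hsup⟩ := exists_wt_super hβ hdec
  exact radial_of_moving_planes hw.continuous hinf fun e he =>
    moving_planes hw heq hnp hinf he
      (exists_rdiff_neg_small hw heq (by linarith) hsup hK he)

/-! ### Weighted means over discs -/

lemma hasDerivAt_max_sq (t : ℝ) : HasDerivAt (fun t : ℝ => max t 0 ^ 2) (2 * max t 0) t := by
  rcases lt_trichotomy t 0 with h | h | h
  · have : (fun t : ℝ => max t 0 ^ 2) =ᶠ[𝓝 t] fun _ => 0 := by
      filter_upwards [eventually_lt_nhds h] with s hs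
      simp [max_eq_right hs.le]
    rw [max_eq_right h.le, mul_zero]
    exact (hasDerivAt_const t 0).congr_of_eventuallyEq this
  · subst h
    rw [hasDerivAt_iff_isLittleO]
    have h1 : (fun s : ℝ => s ^ 2) =o[𝓝 0] fun s : ℝ => s := by
      simpa using (Asymptotics.isLittleO_pow_pow (𝕜 := ℝ) (m := 1) (n := 2) (by norm_num))
    refine (Asymptotics.IsBigO.of_bound 1 (Eventually.of_forall fun s => ?_)).trans_isLittleO
      (h1.trans_isBigO (Asymptotics.isBigO_refl _ _)) |>.congr_right fun s => by simp
    simp only [max_self, mul_zero, smul_zero, sub_zero, ne_eq, OfNat.ofNat_ne_zero,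
      not_false_eq_true, zero_pow, norm_pow, one_mul]
    gcongr
    rw [Real.norm_eq_abs, Real.norm_eq_abs, abs_of_nonneg (le_max_right _ _)]
    exact max_le (le_abs_self s) (abs_nonneg s)
  · have : (fun t : ℝ => max t 0 ^ 2) =ᶠ[𝓝 t] fun t => t ^ 2 := by
      filter_upwards [eventually_gt_nhds h] with s hs
      simp [max_eq_left hs.le]
    rw [max_eq_left h.le]
    have h2 := hasDerivAt_pow 2 t
    refine HasDerivAt.congr_of_eventuallyEq (h2.congr_deriv ?_) this
    norm_num

/-- The weight `(1 - |z|²)₊` of the means. -/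
def cut (z : R2) : ℝ := max (1 - ‖z‖ ^ 2) 0

lemma cut_nonneg (z : R2) : 0 ≤ cut z := le_max_right _ _

lemma cut_le_one (z : R2) : cut z ≤ 1 := max_le (by nlinarith [sq_nonneg ‖z‖]) zero_le_one

lemma cut_eq_zero {z : R2} (hz : 1 ≤ ‖z‖) : cut z = 0 := max_eq_right (by nlinarith)

lemma continuous_cut : Continuous cut := by unfold cut; fun_prop

lemma hasCompactSupport_cut : HasCompactSupport cut :=
  HasCompactSupport.intro (isCompact_closedBall 0 1) fun z hz =>
    cut_eq_zero (by simpa using (not_le.1 (by simpa using hz)).le)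

lemma hasFDerivAt_cut_sq (z : R2) :
    HasFDerivAt (fun z => cut z ^ 2) ((-4 * cut z) • innerSL ℝ z) z := by
  have h1 : HasFDerivAt (fun z : R2 => 1 - ‖z‖ ^ 2) (-(2 • innerSL ℝ z)) z := by
    have := ((hasFDerivAt_id (𝕜 := ℝ) z).norm_sq).const_sub 1
    simpa using this
  have h2 := (hasDerivAt_max_sq (1 - ‖z‖ ^ 2)).comp_hasFDerivAt z h1
  refine h2.congr_fderiv ?_
  ext v
  simp [cut]
  ring

/-- Integral of the weight. -/
def cutMass : ℝ := ∫ z, cut z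

lemma cutMass_pos : 0 < cutMass := by
  refine continuous_cut.integral_pos_of_hasCompactSupport_nonneg_nonzero hasCompactSupport_cut
    cut_nonneg (x := 0) ?_
  simp [cut]

/-- The mean of `w` over the disc of centre `x` and radius `R`, with weight `cut`. -/
def mean (w : R2 → ℝ) (x : R2) (R : ℝ) : ℝ := ∫ z, w (x + R • z) * cut z

lemma integrable_mul_cut {h : R2 → ℝ} (hh : Continuous h) : Integrable fun z => h z * cut z :=
  (hh.mul continuous_cut).integrable_of_hasCompactSupport hasCompactSupport_cut.mul_left

lemma integrable_mul_cut_sq {h : R2 → ℝ} (hh : Continuous h) :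
    Integrable fun z => h z * cut z ^ 2 := by
  have := integrable_mul_cut (hh.mul continuous_cut)
  simpa only [Pi.mul_apply, mul_assoc, ← sq] using this

/-- Green's formula, the weight being `cut z • z = -∇ (cut² / 4) z`. -/
lemma integral_fderiv_mul_cut {w : R2 → ℝ} (hw : ContDiff ℝ 2 w) (x : R2) (R : ℝ) :
    ∫ z, fderiv ℝ w (x + R • z) z * cut z = R / 4 * ∫ z, lap w (x + R • z) * cut z ^ 2 := by
  set b : Fin 2 → R2 := fun i => EuclideanSpace.single i 1 with hb
  have hw1 : ContDiff ℝ 1 (fderiv ℝ w) := hw.fderiv_right (by norm_num)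
  have hl : Continuous fun z : R2 => x + R • z := by fun_prop
  set u : Fin 2 → R2 → ℝ := fun i z => fderiv ℝ w (x + R • z) (b i) with hu
  have hD (i : Fin 2) (z : R2) : HasFDerivAt (u i)
      (R • fderiv ℝ (fun y => fderiv ℝ w y (b i)) (x + R • z)) z := by
    have h1 : DifferentiableAt ℝ (fun y => fderiv ℝ w y (b i)) (x + R • z) :=
      (hw1.differentiable (by norm_num) _).clm_apply (differentiableAt_const _)
    have h2 : HasFDerivAt (fun z : R2 => x + R • z) (R • ContinuousLinearMap.id ℝ R2) z :=
      ((hasFDerivAt_id z).const_smul R).const_add x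
    refine (h1.hasFDerivAt.comp z h2).congr_fderiv ?_
    ext v; simp
  have hL (i : Fin 2) : Continuous fun z => fderiv ℝ (fun y => fderiv ℝ w y (b i)) (x + R • z) (b i) := by
    have h1 : ContDiff ℝ 1 (fun y => fderiv ℝ w y (b i)) := hw1.clm_apply contDiff_const
    exact ((h1.continuous_fderiv (by norm_num)).comp hl).clm_apply continuous_const
  have huc (i : Fin 2) : Continuous (u i) :=
    (hw1.continuous.comp hl).clm_apply continuous_const
  have hparts (i : Fin 2) : ∫ z, u i z * (-4 * cut z * z i)
      = -∫ z, R * fderiv ℝ (fun y => fderiv ℝ w y (b i)) (x + R • z) (b i) * cut z ^ 2 := by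
    have hfd (z : R2) : fderiv ℝ (fun z => cut z ^ 2) z (b i) = -4 * cut z * z i := by
      rw [(hasFDerivAt_cut_sq z).fderiv]
      simp [hb, EuclideanSpace.inner_single_right]
    have hfu (z : R2) : fderiv ℝ (u i) z (b i)
        = R * fderiv ℝ (fun y => fderiv ℝ w y (b i)) (x + R • z) (b i) := by
      rw [(hD i z).fderiv]; simp
    have := integral_mul_fderiv_eq_neg_fderiv_mul_of_integrable (μ := (volume : Measure R2))
      (f := u i) (g := fun z => cut z ^ 2) (v := b i)
      (by simp only [hfu]; exact integrable_mul_cut_sq (continuous_const.mul (hL i)))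
      (by
        simp only [hfd]
        have hc : Continuous fun z : R2 => u i z * (-4 * z i) := by
          have := huc i; fun_prop
        refine (integrable_mul_cut hc).congr (Eventually.of_forall fun z => ?_)
        simp only; ring)
      (integrable_mul_cut_sq (huc i))
      (fun z _ => (hD i z).differentiableAt)
      (fun z _ => (hasFDerivAt_cut_sq z).differentiableAt)
    simpa only [hfd, hfu] using this
  have hexp (z : R2) : fderiv ℝ w (x + R • z) z * cut z
      = ∑ i : Fin 2, -(1 / 4) * (u i z * (-4 * cut z * z i)) := by
    have h1 : z = ∑ i : Fin 2, z i • b i := by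
      ext j; fin_cases j <;> simp [hb, Fin.sum_univ_two]
    have h2 : fderiv ℝ w (x + R • z) z = ∑ i : Fin 2, z i * u i z := by
      conv_lhs => rw [show fderiv ℝ w (x + R • z) z
        = fderiv ℝ w (x + R • z) (∑ i : Fin 2, z i • b i) from by rw [← h1]]
      simp [hu]
    rw [h2]; simp only [Fin.sum_univ_two]; ring
  have hint (i : Fin 2) : Integrable fun z => -(1 / 4) * (u i z * (-4 * cut z * z i)) := by
    have hc : Continuous fun z : R2 => u i z * z i := by
      have := huc i; fun_prop
    refine (integrable_mul_cut hc).congr (Eventually.of_forall fun z => ?_)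
    simp only; ring
  simp only [hexp]
  rw [integral_finsetSum _ fun i _ => hint i]
  simp only [integral_const_mul, hparts]
  simp only [lap]
  have hs (z : R2) : (∑ i : Fin 2, fderiv ℝ (fun y => fderiv ℝ w y (EuclideanSpace.single i 1))
      (x + R • z) (EuclideanSpace.single i 1)) * cut z ^ 2
      = ∑ i : Fin 2, fderiv ℝ (fun y => fderiv ℝ w y (b i)) (x + R • z) (b i) * cut z ^ 2 := by
    rw [Finset.sum_mul]
  simp only [hs]
  rw [integral_finsetSum _ fun i _ => integrable_mul_cut_sq (hL i)]
  simp only [mul_assoc, integral_const_mul, Fin.sum_univ_two]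
  ring

lemma hasDerivAt_mean {w : R2 → ℝ} (hw : ContDiff ℝ 2 w) (x : R2) (R : ℝ) :
    HasDerivAt (mean w x) (R / 4 * ∫ z, lap w (x + R • z) * cut z ^ 2) R := by
  rw [← integral_fderiv_mul_cut hw]
  have hw1 : Continuous (fderiv ℝ w) := hw.continuous_fderiv (by norm_num)
  have hl (R : ℝ) : Continuous fun z : R2 => x + R • z := by fun_prop
  obtain ⟨C, hC⟩ := (isCompact_closedBall x (|R| + 1)).exists_bound_of_continuousOn hw1.continuousOn
  have hC0 : 0 ≤ C := (norm_nonneg _).trans (hC x (mem_closedBall_self (by positivity)))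
  refine (hasDerivAt_integral_of_dominated_loc_of_deriv_le (bound := fun z => C * cut z)
    (ball_mem_nhds R one_pos)
    (Eventually.of_forall fun r => (integrable_mul_cut (hw.continuous.comp (hl r))).aestronglyMeasurable)
    (integrable_mul_cut (hw.continuous.comp (hl R)))
    (F' := fun r z => fderiv ℝ w (x + r • z) z * cut z)
    (integrable_mul_cut ((hw1.comp (hl R)).clm_apply continuous_id)).aestronglyMeasurable
    (Eventually.of_forall fun z r hr => ?_) (integrable_mul_cut continuous_const)
    (Eventually.of_forall fun z r _ => ?_)).2
  · rw [norm_mul, Real.norm_of_nonneg (cut_nonneg z)]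
    rcases le_or_gt 1 ‖z‖ with h | h
    · rw [cut_eq_zero h]; simp
    · refine mul_le_mul_of_nonneg_right ?_ (cut_nonneg z)
      have h1 : ‖r‖ ≤ |R| + 1 := by
        have h2 := norm_sub_norm_le r R
        rw [mem_ball, dist_eq_norm] at hr
        rw [Real.norm_eq_abs R] at h2; linarith
      have h2 := hC (x + r • z) (by
        rw [mem_closedBall, dist_eq_norm, add_sub_cancel_left, norm_smul]
        nlinarith [norm_nonneg r, norm_nonneg z])
      have h3 := (fderiv ℝ w (x + r • z)).le_opNorm z
      nlinarith [norm_nonneg z]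
  · have h1 : HasDerivAt (fun r : ℝ => x + r • z) z r := by
      simpa using ((hasDerivAt_id r).smul_const z).const_add x
    exact ((hw.differentiable (by norm_num) _).hasFDerivAt.comp_hasDerivAt r h1).mul_const _

lemma mean_zero (w : R2 → ℝ) (x : R2) : mean w x 0 = cutMass * w x := by
  simp [mean, cutMass, integral_const_mul, mul_comm]

/-! ### The Green function of a disc adapted to the weight -/

/-- The profile of the Green function on `(0, 1]`; its derivative is `-(1 - s)² / (8 s)`. -/
def prof (s : ℝ) : ℝ := (1 / 8) * (-log s - 2 * (1 - s) + (1 / 2) * (1 - s ^ 2))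

/-- The Green function of the disc of radius `R`, for the weight `cut`, with pole at `0`. -/
def green (R : ℝ) (z : R2) : ℝ := prof (min (‖z‖ ^ 2 / R ^ 2) 1)

lemma hasDerivAt_prof {s : ℝ} (hs : 0 < s) : HasDerivAt prof (-((1 - s) ^ 2 / (8 * s))) s := by
  have h1 := ((Real.hasDerivAt_log hs.ne').neg.sub
    (((hasDerivAt_id s).const_sub 1).const_mul 2)).add
    (((hasDerivAt_pow 2 s).const_sub 1).const_mul (1 / 2 : ℝ)) |>.const_mul (1 / 8 : ℝ)
  refine h1.congr_deriv ?_
  norm_num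
  field_simp
  ring

lemma prof_one : prof 1 = 0 := by simp [prof]

lemma hasDerivAt_prof_min {s : ℝ} (hs : 0 < s) :
    HasDerivAt (fun s => prof (min s 1)) (-(max (1 - s) 0 ^ 2 / (8 * s))) s := by
  rcases lt_trichotomy s 1 with h | h | h
  · rw [max_eq_left (by linarith)]
    refine (hasDerivAt_prof hs).congr_of_eventuallyEq ?_
    filter_upwards [eventually_lt_nhds h] with t ht
    rw [min_eq_left ht.le]
  · subst h
    have h1 : HasDerivWithinAt (fun s => prof (min s 1)) 0 (Iic 1) 1 := by
      have := (hasDerivAt_prof one_pos).hasDerivWithinAt (s := Iic 1)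
      simp only [sub_self] at this
      norm_num at this
      refine this.congr (fun t ht => ?_) (by simp)
      rw [min_eq_left ht]
    have h2 : HasDerivWithinAt (fun s => prof (min s 1)) 0 (Ici 1) 1 := by
      refine (hasDerivWithinAt_const (1 : ℝ) (Ici 1) (0 : ℝ)).congr (fun t ht => ?_)
        (by simp [prof_one])
      rw [min_eq_right ht, prof_one]
    have h3 := h1.union h2
    rw [Iic_union_Ici, hasDerivWithinAt_univ] at h3
    exact h3.congr_deriv (by norm_num)
  · rw [max_eq_right (by linarith)]
    refine ((hasDerivAt_const s (0 : ℝ)).congr_of_eventuallyEq ?_).congr_deriv (by simp)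
    filter_upwards [eventually_gt_nhds h] with t ht
    rw [min_eq_right ht.le, prof_one]

lemma hasDerivAt_green {R : ℝ} (hR : 0 < R) {z : R2} (hz : z ≠ 0) :
    HasDerivAt (fun R => green R z) (cut (R⁻¹ • z) ^ 2 / (4 * R)) R := by
  have hz0 : 0 < ‖z‖ := norm_pos_iff.2 hz
  have h1 : HasDerivAt (fun R : ℝ => ‖z‖ ^ 2 / R ^ 2) (-(2 * ‖z‖ ^ 2 / R ^ 3)) R := by
    have := ((hasDerivAt_pow 2 R).inv (by positivity)).const_mul (‖z‖ ^ 2)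
    simp only [div_eq_mul_inv] at this ⊢
    refine this.congr_deriv ?_
    norm_num
    field_simp
  have h2 := (hasDerivAt_prof_min (s := ‖z‖ ^ 2 / R ^ 2) (by positivity)).comp R h1
  refine h2.congr_deriv ?_
  have h3 : cut (R⁻¹ • z) = max (1 - ‖z‖ ^ 2 / R ^ 2) 0 := by
    rw [cut, norm_smul, norm_inv, Real.norm_of_nonneg hR.le, mul_pow, inv_pow]
    congr 2; field_simp
  rw [h3]
  field_simp
  ring

lemma abs_green_le {R : ℝ} (hR : 0 < R) {z : R2} (hz : z ≠ 0) :
    |green R z| ≤ R / 4 * ‖z‖⁻¹ := by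
  have hz0 : 0 < ‖z‖ := norm_pos_iff.2 hz
  rcases le_or_gt R ‖z‖ with h | h
  · have : green R z = 0 := by
      rw [green, min_eq_right, prof_one]
      rw [le_div_iff₀ (by positivity), one_mul]
      gcongr
    rw [this, abs_zero]; positivity
  · set t := ‖z‖ / R with ht
    have ht0 : 0 < t := by positivity
    have ht1 : t < 1 := by rw [ht, div_lt_one hR]; exact h
    have h1 : green R z = prof (t ^ 2) := by
      rw [green, min_eq_left, ht, div_pow]
      rw [← div_pow, ← ht]; nlinarith
    have h2 : R / 4 * ‖z‖⁻¹ = 1 / 4 * t⁻¹ := by rw [ht]; field_simp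
    rw [h1, h2, prof, Real.log_pow]
    have h3 := Real.log_le_sub_one_of_pos (inv_pos.2 ht0)
    rw [Real.log_inv] at h3
    have h4 := Real.log_le_sub_one_of_pos (show 0 < t ^ 2 by positivity)
    rw [Real.log_pow] at h4
    have h5 : 1 ≤ t⁻¹ := (one_le_inv₀ ht0).2 ht1.le
    have h6 : 0 < t ^ 2 := by positivity
    have h7 : t ^ 2 < 1 := by nlinarith
    push_cast at *
    rw [abs_le]
    constructor <;> nlinarith

lemma measurable_green (R : ℝ) : Measurable (green R) := by
  unfold green prof; fun_prop

/-- `green R` is Lipschitz as a function of `log |z|`, uniformly in `R`. -/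
lemma abs_green_sub_le {R : ℝ} (hR : 0 < R) {y z : R2} (hy : y ≠ 0) (hz : z ≠ 0) :
    |green R y - green R z| ≤ 1 / 4 * |log ‖y‖ - log ‖z‖| := by
  have hy0 : 0 < ‖y‖ := norm_pos_iff.2 hy
  have hz0 : 0 < ‖z‖ := norm_pos_iff.2 hz
  set h : ℝ → ℝ := fun τ => prof (min (exp τ) 1) with hh
  have hd (τ : ℝ) : HasDerivAt h (-(max (1 - exp τ) 0 ^ 2 / 8)) τ := by
    have := (hasDerivAt_prof_min (exp_pos τ)).comp τ (Real.hasDerivAt_exp τ)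
    refine this.congr_deriv ?_
    field_simp [(exp_pos τ).ne']
  have hb (τ : ℝ) : ‖-(max (1 - exp τ) 0 ^ 2 / 8)‖ ≤ 1 / 8 := by
    have h1 : max (1 - exp τ) 0 ≤ 1 := max_le (by linarith [exp_pos τ]) zero_le_one
    have h2 : 0 ≤ max (1 - exp τ) 0 := le_max_right _ _
    rw [norm_neg, Real.norm_of_nonneg (by positivity)]
    nlinarith
  have hg (u : R2) (hu : 0 < ‖u‖) : green R u = h (2 * log ‖u‖ - 2 * log R) := by
    have : exp (2 * log ‖u‖ - 2 * log R) = ‖u‖ ^ 2 / R ^ 2 := by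
      rw [Real.exp_sub, ← Nat.cast_ofNat, ← Real.log_pow, ← Real.log_pow,
        Real.exp_log (by positivity), Real.exp_log (by positivity)]
    simp only [hh, this]; rfl
  have hmv := (convex_univ (𝕜 := ℝ)).norm_image_sub_le_of_norm_hasDerivWithin_le
    (fun τ _ => (hd τ).hasDerivWithinAt) (fun τ _ => hb τ) (mem_univ (2 * log ‖z‖ - 2 * log R))
    (mem_univ (2 * log ‖y‖ - 2 * log R))
  rw [hg y hy0, hg z hz0]
  rw [Real.norm_eq_abs, Real.norm_eq_abs] at hmv
  refine hmv.trans (le_of_eq ?_)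
  have : 2 * log ‖y‖ - 2 * log R - (2 * log ‖z‖ - 2 * log R) = 2 * (log ‖y‖ - log ‖z‖) := by ring
  rw [this, abs_mul, abs_of_pos (by norm_num : (0 : ℝ) < 2)]
  ring

lemma tendsto_green_sub {y z : R2} (hy : y ≠ 0) (hz : z ≠ 0) :
    Tendsto (fun R => green R y - green R z) atTop (𝓝 (1 / 4 * (log ‖z‖ - log ‖y‖))) := by
  have hy0 : 0 < ‖y‖ := norm_pos_iff.2 hy
  have hz0 : 0 < ‖z‖ := norm_pos_iff.2 hz
  have ht (c : ℝ) : Tendsto (fun R : ℝ => c / R ^ 2) atTop (𝓝 0) :=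
    tendsto_const_nhds.div_atTop (tendsto_pow_atTop two_ne_zero)
  have h1 (u : R2) (hu : 0 < ‖u‖) : ∀ᶠ R : ℝ in atTop, green R u
      = 1 / 8 * (2 * log R - 2 * log ‖u‖ - 2 * (1 - ‖u‖ ^ 2 / R ^ 2)
        + 1 / 2 * (1 - (‖u‖ ^ 2 / R ^ 2) ^ 2)) := by
    filter_upwards [(ht (‖u‖ ^ 2)).eventually_lt_const one_pos, eventually_gt_atTop 0] with R h2 h3
    rw [green, min_eq_left h2.le, prof, Real.log_div (by positivity) (by positivity),
      Real.log_pow, Real.log_pow]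
    push_cast; ring
  have h2 : Tendsto (fun R : ℝ => 1 / 8 * (2 * log ‖z‖ - 2 * log ‖y‖
      + 2 * (‖y‖ ^ 2 / R ^ 2 - ‖z‖ ^ 2 / R ^ 2)
      - 1 / 2 * ((‖y‖ ^ 2 / R ^ 2) ^ 2 - (‖z‖ ^ 2 / R ^ 2) ^ 2))) atTop
      (𝓝 (1 / 8 * (2 * log ‖z‖ - 2 * log ‖y‖ + 2 * (0 - 0) - 1 / 2 * (0 ^ 2 - 0 ^ 2)))) := by
    refine ((tendsto_const_nhds.add (((ht _).sub (ht _)).const_mul 2)).sub ?_).const_mul _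
    exact (((ht _).pow 2).sub ((ht _).pow 2)).const_mul _
  have h3 : 1 / 8 * (2 * log ‖z‖ - 2 * log ‖y‖ + 2 * ((0 : ℝ) - 0) - 1 / 2 * (0 ^ 2 - 0 ^ 2))
      = 1 / 4 * (log ‖z‖ - log ‖y‖) := by ring
  rw [h3] at h2
  refine h2.congr' ?_
  filter_upwards [h1 y hy0, h1 z hz0] with R h4 h5
  rw [h4, h5]; ring

/-! ### Representation formula -/

lemma integrableOn_inv_norm : IntegrableOn (fun z : R2 => ‖z‖⁻¹) (ball 0 1) := by
  rw [integrableOn_fun_norm_addHaar (volume : Measure R2) (f := fun r : ℝ => r⁻¹)]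
  have h1 : IntegrableOn (fun _ : ℝ => (1 : ℝ)) (Ioo 0 1) := by simp
  refine h1.congr_fun (fun r hr => ?_) measurableSet_Ioo
  have h2 : r ≠ 0 := hr.1.ne'
  simp [h2]

lemma ae_ne_zero : ∀ᵐ u : R2, u ≠ 0 := by
  simp [ae_iff]

/-- A continuous integrable source term with values in `[0, 1]`. -/
structure IsSource (f : R2 → ℝ) : Prop where
  continuous : Continuous f
  nonneg : ∀ x, 0 ≤ f x
  le_one : ∀ x, f x ≤ 1
  integrable : Integrable f

/-- The kernel `1 / |u|` is integrable near its pole and bounded away from it, hence the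
convolution of a source with it is bounded. -/
lemma exists_bound_inv_norm {f : R2 → ℝ} (hf : IsSource f) :
    ∃ D : ℝ, 0 ≤ D ∧ ∀ x, Integrable (fun u => ‖u‖⁻¹ * f (x + u)) ∧
      ∫ u, ‖u‖⁻¹ * f (x + u) ≤ D := by
  set k : R2 → ℝ := (ball (0 : R2) 1).indicator fun z => ‖z‖⁻¹ with hk
  have hki : Integrable k := (integrable_indicator_iff measurableSet_ball).2 integrableOn_inv_norm
  have hk0 (u : R2) : 0 ≤ k u := indicator_nonneg (fun _ _ => by positivity) _
  have hle (x u : R2) : ‖u‖⁻¹ * f (x + u) ≤ k u + f (x + u) := by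
    by_cases hu : u ∈ ball (0 : R2) 1
    · have : k u = ‖u‖⁻¹ := indicator_of_mem hu _
      rw [this]
      nlinarith [hf.nonneg (x + u), mul_le_mul_of_nonneg_left (hf.le_one (x + u)) (inv_nonneg.2 (norm_nonneg u))]
    · have h1 : 1 ≤ ‖u‖ := by simpa using hu
      have h2 : ‖u‖⁻¹ ≤ 1 := inv_le_one_of_one_le₀ h1
      nlinarith [hk0 u, hf.nonneg (x + u)]
  have hft (x : R2) : Integrable fun u => f (x + u) := hf.integrable.comp_add_left x
  have hI (x : R2) : Integrable (fun u => ‖u‖⁻¹ * f (x + u)) := by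
    refine (hki.add (hft x)).mono' ?_ (Eventually.of_forall fun u => ?_)
    · exact ((measurable_norm.inv).mul (hf.continuous.comp (by fun_prop)).measurable).aestronglyMeasurable
    · rw [Real.norm_of_nonneg (mul_nonneg (by positivity) (hf.nonneg _))]
      exact hle x u
  refine ⟨(∫ u, k u) + ∫ u, f u, add_nonneg (integral_nonneg hk0) (integral_nonneg hf.nonneg),
    fun x => ⟨hI x, ?_⟩⟩
  calc _ ≤ ∫ u, (k u + f (x + u)) := integral_mono (hI x) (hki.add (hft x)) (hle x)
    _ = _ := by rw [integral_add hki (hft x), integral_add_left_eq_self f x]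

/-- The Green potential of `f` in the disc of centre `x` and radius `R`. -/
def pot (f : R2 → ℝ) (x : R2) (R : ℝ) : ℝ := ∫ u, green R u * f (x + u)

lemma integrable_green_mul {f : R2 → ℝ} (hf : IsSource f) {R : ℝ} (hR : 0 < R) (x : R2) :
    Integrable fun u => green R u * f (x + u) := by
  obtain ⟨D, -, hD⟩ := exists_bound_inv_norm hf
  refine ((hD x).1.const_mul (R / 4)).mono' ?_ ?_
  · exact ((measurable_green R).mul (hf.continuous.comp (by fun_prop)).measurable).aestronglyMeasurable
  · filter_upwards [ae_ne_zero] with u hu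
    rw [norm_mul, Real.norm_of_nonneg (hf.nonneg _), Real.norm_eq_abs, ← mul_assoc]
    exact mul_le_mul_of_nonneg_right (abs_green_le hR hu) (hf.nonneg _)

lemma exists_abs_pot_le {f : R2 → ℝ} (hf : IsSource f) : ∃ D : ℝ, 0 ≤ D ∧ ∀ x R, 0 < R → |pot f x R| ≤ R * D := by
  obtain ⟨D, hD0, hD⟩ := exists_bound_inv_norm hf
  refine ⟨D / 4, by positivity, fun x R hR => ?_⟩
  have h1 : |pot f x R| ≤ ∫ u, R / 4 * (‖u‖⁻¹ * f (x + u)) := by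
    rw [← Real.norm_eq_abs]
    refine norm_integral_le_of_norm_le ((hD x).1.const_mul (R / 4)) ?_
    filter_upwards [ae_ne_zero] with u hu
    rw [norm_mul, Real.norm_of_nonneg (hf.nonneg _), Real.norm_eq_abs, ← mul_assoc]
    exact mul_le_mul_of_nonneg_right (abs_green_le hR hu) (hf.nonneg _)
  rw [integral_const_mul] at h1
  nlinarith [(hD x).2]

lemma hasDerivAt_pot {f : R2 → ℝ} (hf : IsSource f) {R : ℝ} (hR : 0 < R) (x : R2) :
    HasDerivAt (pot f x) (∫ u, cut (R⁻¹ • u) ^ 2 / (4 * R) * f (x + u)) R := by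
  have hft : Integrable fun u => f (x + u) := hf.integrable.comp_add_left x
  have hfm : Measurable fun u => f (x + u) := (hf.continuous.comp (by fun_prop)).measurable
  refine (hasDerivAt_integral_of_dominated_loc_of_deriv_le
    (bound := fun u => 1 / (2 * R) * f (x + u)) (Ioi_mem_nhds (half_lt_self hR))
    (Eventually.of_forall fun r => ((measurable_green r).mul hfm).aestronglyMeasurable)
    (integrable_green_mul hf hR x)
    (F' := fun r u => cut (r⁻¹ • u) ^ 2 / (4 * r) * f (x + u))
    ?_ (Eventually.of_forall fun u r hr => ?_) (hft.const_mul _) ?_).2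
  · refine (Measurable.mul ?_ hfm).aestronglyMeasurable
    have : Continuous fun u : R2 => cut (R⁻¹ • u) := continuous_cut.comp (by fun_prop)
    exact ((this.pow 2).div_const _).measurable
  · have hr0 : 0 < r := (half_pos hR).trans hr
    rw [norm_mul, Real.norm_of_nonneg (hf.nonneg _), Real.norm_of_nonneg (by positivity)]
    refine mul_le_mul_of_nonneg_right ?_ (hf.nonneg _)
    have h1 := cut_nonneg (r⁻¹ • u)
    have h2 := cut_le_one (r⁻¹ • u)
    have h3 : 2 * R ≤ 4 * r := by have : R / 2 < r := hr
                                  linarith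
    gcongr
    nlinarith
  · filter_upwards [ae_ne_zero] with u hu r hr
    exact (hasDerivAt_green ((half_pos hR).trans hr) hu).mul_const _

lemma hasDerivAt_mean_source {w f : R2 → ℝ} (hw : ContDiff ℝ 2 w)
    (hlap : ∀ x, lap w x = -f x) {R : ℝ} (hR : 0 < R) (x : R2) :
    HasDerivAt (mean w x) (-∫ u, cut (R⁻¹ • u) ^ 2 / (4 * R) * f (x + u)) R := by
  refine (hasDerivAt_mean hw x R).congr_deriv ?_
  have h1 := Measure.integral_comp_smul (volume : Measure R2)
    (fun u => cut (R⁻¹ • u) ^ 2 / (4 * R) * f (x + u)) R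
  have h2 (z : R2) : R⁻¹ • R • z = z := by rw [smul_smul, inv_mul_cancel₀ hR.ne', one_smul]
  simp only [h2, finrank_euclideanSpace, Fintype.card_fin, smul_eq_mul] at h1
  rw [abs_of_pos (by positivity), eq_inv_mul_iff_mul_eq₀ (by positivity)] at h1
  rw [← h1, ← integral_const_mul, ← integral_const_mul, ← integral_neg]
  congr 1
  funext z
  rw [hlap]
  field_simp

/-- Green's representation of `w x` by its weighted mean and the potential of `-Δw`. -/
lemma mean_add_pot {w f : R2 → ℝ} (hf : IsSource f) (hw : ContDiff ℝ 2 w)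
    (hlap : ∀ x, lap w x = -f x) {R : ℝ} (hR : 0 < R) (x : R2) :
    mean w x R + pot f x R = cutMass * w x := by
  have hd (r : ℝ) (hr : 0 < r) : HasDerivAt (fun r => mean w x r + pot f x r) 0 r := by
    have := (hasDerivAt_mean_source hw hlap hr x).add
      (hasDerivAt_pot hf hr x)
    exact this.congr_deriv (by simp)
  have hconst : ∀ r, 0 < r → mean w x r + pot f x r = mean w x R + pot f x R := fun r hr =>
    (isOpen_Ioi (a := (0 : ℝ))).is_const_of_deriv_eq_zero isPreconnected_Ioi
      (fun s hs => (hd s hs).differentiableAt.differentiableWithinAt)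
      (fun s hs => (hd s hs).deriv) hr hR
  obtain ⟨D, hD0, hD⟩ := exists_abs_pot_le hf
  have h1 : Tendsto (mean w x) (𝓝[>] 0) (𝓝 (mean w x 0)) :=
    (hasDerivAt_mean hw x 0).continuousAt.tendsto.mono_left nhdsWithin_le_nhds
  have h2 : Tendsto (pot f x) (𝓝[>] 0) (𝓝 0) := by
    refine squeeze_zero_norm' (a := fun r => r * D) ?_ ?_
    · filter_upwards [self_mem_nhdsWithin] with r hr using hD x r hr
    · have : Continuous fun r : ℝ => r * D := by fun_prop
      simpa using (this.tendsto 0).mono_left nhdsWithin_le_nhds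
  have h3 := h1.add h2
  rw [mean_zero, add_zero] at h3
  refine tendsto_nhds_unique (tendsto_const_nhds.congr' ?_) h3
  filter_upwards [self_mem_nhdsWithin] with r hr using (hconst r hr).symm

/-! ### The integral equation in the whole plane -/

/-- The means of `w` decrease at most logarithmically. -/
lemma exists_le_mean {w f : R2 → ℝ} (hf : IsSource f) (hw : ContDiff ℝ 2 w)
    (hlap : ∀ x, lap w x = -f x) :
    ∀ R, 1 ≤ R → mean w 0 1 - (∫ u, f u) / 4 * log R ≤ mean w 0 R := by
  intro R hR
  set F := ∫ u, f u with hF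
  have hd (r : ℝ) (hr : 0 < r) : HasDerivAt (fun r => mean w 0 r + F / 4 * log r)
      (-(∫ u, cut (r⁻¹ • u) ^ 2 / (4 * r) * f (0 + u)) + F / 4 * r⁻¹) r :=
    (hasDerivAt_mean_source hw hlap hr 0).add ((hasDerivAt_log hr.ne').const_mul _)
  have hpos (r : ℝ) (hr : 0 < r) :
      0 ≤ -(∫ u, cut (r⁻¹ • u) ^ 2 / (4 * r) * f (0 + u)) + F / 4 * r⁻¹ := by
    have h1 : ∫ u, cut (r⁻¹ • u) ^ 2 / (4 * r) * f (0 + u) ≤ ∫ u, 1 / (4 * r) * f u := by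
      refine integral_mono_of_nonneg (Eventually.of_forall fun u => ?_)
        (hf.integrable.const_mul _) (Eventually.of_forall fun u => ?_)
      · exact mul_nonneg (by positivity) (hf.nonneg _)
      · simp only [zero_add]
        refine mul_le_mul_of_nonneg_right ?_ (hf.nonneg _)
        gcongr
        nlinarith [cut_nonneg (r⁻¹ • u), cut_le_one (r⁻¹ • u)]
    rw [integral_const_mul, ← hF] at h1
    have h2 : 1 / (4 * r) * F = F / 4 * r⁻¹ := by field_simp
    linarith
  have hmono : MonotoneOn (fun r => mean w 0 r + F / 4 * log r) (Ioi 0) := by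
    refine monotoneOn_of_deriv_nonneg (convex_Ioi 0)
      (fun r hr => (hd r hr).continuousAt.continuousWithinAt) (fun r hr => ?_) (fun r hr => ?_)
    · rw [interior_Ioi] at hr
      exact (hd r hr).differentiableAt.differentiableWithinAt
    · rw [interior_Ioi] at hr
      rw [(hd r hr).deriv]; exact hpos r hr
  have := hmono (mem_Ioi.2 one_pos) (mem_Ioi.2 (one_pos.trans_le hR)) hR
  simp only [log_one, mul_zero, add_zero] at this
  linarith

lemma abs_cut_sub_le {z h : R2} (hh : ‖h‖ ≤ 1) :
    |cut (z - h) - cut z| ≤ 7 * ‖h‖ * cut ((1 / 4 : ℝ) • z) := by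
  have h1 : ‖z‖ ≤ ‖z - h‖ + ‖h‖ := by simpa using norm_add_le (z - h) h
  have h2 : ‖z - h‖ ≤ ‖z‖ + ‖h‖ := norm_sub_le z h
  have hh0 := norm_nonneg h
  rcases le_or_gt 2 ‖z‖ with hz | hz
  · rw [cut_eq_zero (by linarith), cut_eq_zero (by linarith)]
    simpa using mul_nonneg (by positivity) (cut_nonneg _)
  · have h3 : 3 / 4 ≤ cut ((1 / 4 : ℝ) • z) := by
      refine le_trans ?_ (le_max_left _ _)
      rw [norm_smul, Real.norm_of_nonneg (by norm_num)]
      nlinarith [norm_nonneg z]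
    have h4 : |cut (z - h) - cut z| ≤ |(1 - ‖z - h‖ ^ 2) - (1 - ‖z‖ ^ 2)| := by
      exact abs_max_sub_max_le_abs _ _ _
    have h5 : |(1 - ‖z - h‖ ^ 2) - (1 - ‖z‖ ^ 2)| ≤ 5 * ‖h‖ := by
      have h6 := norm_nonneg z
      have h7 := norm_nonneg (z - h)
      rw [abs_le]; constructor <;> nlinarith
    nlinarith

/-- The means of a nonpositive function around two centres differ little for large radii. -/
lemma abs_mean_sub_le {w : R2 → ℝ} (hw : Continuous w) (hnp : ∀ x, w x ≤ 0) {x : R2} {R : ℝ}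
    (hR : 0 < R) (hx : ‖x‖ ≤ R) :
    |mean w x R - mean w 0 R| ≤ 112 * (‖x‖ / R) * -mean w 0 (4 * R) := by
  set h : R2 := R⁻¹ • x with hh
  have hhn : ‖h‖ = ‖x‖ / R := by
    rw [hh, norm_smul, norm_inv, Real.norm_of_nonneg hR.le]; field_simp
  have hh1 : ‖h‖ ≤ 1 := by rw [hhn]; exact (div_le_one hR).2 hx
  have hc : Continuous fun z : R2 => w (R • z) := hw.comp (by fun_prop)
  have hcx : Continuous fun z : R2 => w (x + R • z) := hw.comp (by fun_prop)
  have hxe (z : R2) : x + R • (z - h) = R • z := by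
    rw [smul_sub, hh, smul_smul, mul_inv_cancel₀ hR.ne', one_smul]; abel
  have hi1 : Integrable fun z => w (R • z) * cut (z - h) := by
    have := (integrable_mul_cut hcx).comp_sub_right h
    simpa only [hxe] using this
  have h1 : mean w x R = ∫ z, w (R • z) * cut (z - h) := by
    have := integral_sub_right_eq_self (μ := (volume : Measure R2))
      (fun z => w (x + R • z) * cut z) h
    rw [mean, ← this]; simp only [hxe]
  have h2 : mean w 0 R = ∫ z, w (R • z) * cut z := by simp [mean]
  have hq (z : R2) : (4 : ℝ) • (1 / 4 : ℝ) • z = z := by rw [smul_smul]; norm_num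
  have h3 : ∫ z, -w (R • z) * (7 * ‖h‖ * cut ((1 / 4 : ℝ) • z))
      = 112 * ‖h‖ * -mean w 0 (4 * R) := by
    have := Measure.integral_comp_smul (volume : Measure R2)
      (fun z => -w ((4 * R) • z) * (7 * ‖h‖ * cut z)) (1 / 4 : ℝ)
    have he (z : R2) : (4 * R) • (1 / 4 : ℝ) • z = R • z := by
      rw [smul_smul]; congr 1; ring
    simp only [he, finrank_euclideanSpace, Fintype.card_fin, smul_eq_mul] at this
    rw [this, mean, ← integral_neg, ← integral_const_mul, ← integral_const_mul]
    congr 1; funext z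
    norm_num
    ring
  have hi3 : Integrable fun z => -w (R • z) * (7 * ‖h‖ * cut ((1 / 4 : ℝ) • z)) := by
    have hc4 : Continuous fun z : R2 => -(7 * ‖h‖) * w ((4 * R) • z) :=
      continuous_const.mul (hw.comp (by fun_prop))
    have := (integrable_mul_cut hc4).comp_smul (show (1 / 4 : ℝ) ≠ 0 by norm_num)
    refine this.congr (Eventually.of_forall fun z => ?_)
    have he : (4 * R) • (1 / 4 : ℝ) • z = R • z := by
      rw [smul_smul]; congr 1; ring
    simp only [he]; ring
  rw [← hhn, ← h3, h1, h2, ← integral_sub hi1 (integrable_mul_cut hc), ← Real.norm_eq_abs]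
  refine norm_integral_le_of_norm_le hi3 (Eventually.of_forall fun z => ?_)
  rw [← mul_sub, norm_mul, Real.norm_eq_abs, Real.norm_eq_abs, abs_of_nonpos (hnp _)]
  exact mul_le_mul_of_nonneg_left (abs_cut_sub_le hh1) (by linarith [hnp (R • z)])

lemma tendsto_mean_sub {w f : R2 → ℝ} (hf : IsSource f) (hw : ContDiff ℝ 2 w)
    (hlap : ∀ x, lap w x = -f x) (hnp : ∀ x, w x ≤ 0) (x : R2) :
    Tendsto (fun R => mean w x R - mean w 0 R) atTop (𝓝 0) := by
  set F := ∫ u, f u with hF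
  have hb : Tendsto (fun R : ℝ => 112 * ‖x‖ * ((F / 4 * log 4 - mean w 0 1) * R⁻¹ + F / 4 * (log R / R)))
      atTop (𝓝 0) := by
    have h1 : Tendsto (fun R : ℝ => log R / R) atTop (𝓝 0) := by
      simpa using tendsto_pow_log_div_mul_add_atTop 1 0 1 one_ne_zero
    have := ((tendsto_inv_atTop_zero.const_mul (F / 4 * log 4 - mean w 0 1)).add
      (h1.const_mul (F / 4))).const_mul (112 * ‖x‖)
    simpa using this
  refine squeeze_zero_norm' ?_ hb
  filter_upwards [eventually_ge_atTop 1, eventually_ge_atTop ‖x‖] with R hR hx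
  have hR0 : 0 < R := by linarith
  rw [Real.norm_eq_abs]
  refine (abs_mean_sub_le hw.continuous hnp hR0 hx).trans ?_
  have h1 := exists_le_mean hf hw hlap (4 * R) (by linarith)
  rw [log_mul (by norm_num) hR0.ne', ← hF] at h1
  calc 112 * (‖x‖ / R) * -mean w 0 (4 * R)
      ≤ 112 * (‖x‖ / R) * (F / 4 * log 4 - mean w 0 1 + F / 4 * log R) := by
        refine mul_le_mul_of_nonneg_left ?_ (by positivity)
        linarith
    _ = _ := by field_simp

/-- The kernel of the integral equation. -/
def logKer (x y : R2) : ℝ := log (1 + ‖x - y‖) - log (1 + ‖y‖)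

lemma logKer_le (x y : R2) : logKer x y ≤ log (1 + ‖x‖) := by
  have h1 : log (1 + ‖x - y‖) ≤ log ((1 + ‖x‖) * (1 + ‖y‖)) := by
    refine log_le_log (by positivity) ?_
    nlinarith [norm_sub_le x y, norm_nonneg x, norm_nonneg y]
  rw [log_mul (by positivity) (by positivity)] at h1
  unfold logKer; linarith

lemma neg_le_logKer (x y : R2) : -log (1 + ‖x‖) ≤ logKer x y := by
  have h1 : log (1 + ‖y‖) ≤ log ((1 + ‖x‖) * (1 + ‖x - y‖)) := by
    refine log_le_log (by positivity) ?_
    have := norm_sub_norm_le y x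
    rw [norm_sub_rev] at this
    nlinarith [norm_nonneg x, norm_nonneg (x - y)]
  rw [log_mul (by positivity) (by positivity)] at h1
  unfold logKer; linarith

lemma log_one_add_sub_log {t : ℝ} (ht : 0 < t) : |log (1 + t) - log t| ≤ t⁻¹ := by
  rw [abs_of_nonneg (sub_nonneg.2 (log_le_log ht (by linarith))),
    ← log_div (by positivity) ht.ne']
  refine (log_le_sub_one_of_pos (by positivity)).trans_eq ?_
  field_simp; ring

lemma continuous_logKer (x : R2) : Continuous (logKer x) := by
  unfold logKer
  have h1 : Continuous fun y : R2 => log (1 + ‖x - y‖) :=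
    Continuous.log (by fun_prop) fun y => by positivity
  have h2 : Continuous fun y : R2 => log (1 + ‖y‖) :=
    Continuous.log (by fun_prop) fun y => by positivity
  exact h1.sub h2

lemma integrable_logKer_mul {f : R2 → ℝ} (hf : IsSource f) (x : R2) :
    Integrable fun y => logKer x y * f y := by
  refine (hf.integrable.const_mul (log (1 + ‖x‖))).mono'
    ((continuous_logKer x).mul hf.continuous).aestronglyMeasurable
    (Eventually.of_forall fun y => ?_)
  rw [norm_mul, Real.norm_of_nonneg (hf.nonneg y), Real.norm_eq_abs]
  exact mul_le_mul_of_nonneg_right (abs_le.2 ⟨neg_le_logKer x y, logKer_le x y⟩) (hf.nonneg y)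

lemma abs_log_sub_sub_logKer_le {x y : R2} (hy : y ≠ 0) (hyx : y - x ≠ 0) :
    |(log ‖y - x‖ - log ‖y‖) - logKer x y| ≤ ‖y - x‖⁻¹ + ‖y‖⁻¹ := by
  have h1 := log_one_add_sub_log (norm_pos_iff.2 hy)
  have h2 := log_one_add_sub_log (norm_pos_iff.2 hyx)
  rw [abs_le] at *
  rw [logKer, norm_sub_rev x y]
  constructor <;> linarith [h1.1, h1.2, h2.1, h2.2]

/-- A nonpositive solution of `-Δw = f` is, up to a bounded error, the logarithmic potential of
`f`. -/
lemma exists_abs_add_integral_logKer_le {w f : R2 → ℝ} (hf : IsSource f) (hw : ContDiff ℝ 2 w)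
    (hlap : ∀ x, lap w x = -f x) (hnp : ∀ x, w x ≤ 0) :
    ∃ C, ∀ x, |w x + 1 / (4 * cutMass) * ∫ y, logKer x y * f y| ≤ C := by
  obtain ⟨D, hD0, hD⟩ := exists_bound_inv_norm hf
  have hinv (x : R2) : Integrable (fun y => ‖y - x‖⁻¹ * f y) ∧ ∫ y, ‖y - x‖⁻¹ * f y ≤ D := by
    have h1 := (hD x).1.comp_sub_right x
    have h2 := integral_sub_right_eq_self (μ := (volume : Measure R2))
      (fun u => ‖u‖⁻¹ * f (x + u)) x
    simp only [add_sub_cancel] at h1 h2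
    exact ⟨h1, h2 ▸ (hD x).2⟩
  have hinv0 : Integrable (fun y => ‖y‖⁻¹ * f y) ∧ ∫ y, ‖y‖⁻¹ * f y ≤ D := by
    simpa using hinv 0
  have hne (x : R2) : ∀ᵐ y : R2, y - x ≠ 0 := by
    simp [ae_iff, sub_eq_zero]
  have hpot (x : R2) (R : ℝ) : pot f x R = ∫ y, green R (y - x) * f y := by
    have h2 := integral_sub_right_eq_self (μ := (volume : Measure R2))
      (fun u => green R u * f (x + u)) x
    simp only [add_sub_cancel] at h2
    rw [h2]; rfl
  have hpi (x : R2) {R : ℝ} (hR : 0 < R) : Integrable fun y => green R (y - x) * f y := by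
    have h1 := (integrable_green_mul hf hR x).comp_sub_right x
    simpa only [add_sub_cancel] using h1
  have hlim (x : R2) : Tendsto (fun R => pot f x R - pot f 0 R) atTop
      (𝓝 (∫ y, 1 / 4 * (log ‖y‖ - log ‖y - x‖) * f y)) := by
    have h1 : Tendsto (fun R => ∫ y, (green R (y - x) - green R y) * f y) atTop
        (𝓝 (∫ y, 1 / 4 * (log ‖y‖ - log ‖y - x‖) * f y)) := by
      refine tendsto_integral_filter_of_dominated_convergence
        (fun y => 1 / 4 * (log (1 + ‖x‖) * f y + ‖y - x‖⁻¹ * f y + ‖y‖⁻¹ * f y))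
        (Eventually.of_forall fun R => ?_) ?_
        ((((hf.integrable.const_mul _).add (hinv x).1).add hinv0.1).const_mul _) ?_
      · exact ((((measurable_green R).comp (measurable_id.sub_const x)).sub
          (measurable_green R)).mul hf.continuous.measurable).aestronglyMeasurable
      · filter_upwards [eventually_gt_atTop 0] with R hR
        filter_upwards [ae_ne_zero, hne x] with y hy hyx
        rw [norm_mul, Real.norm_of_nonneg (hf.nonneg y), Real.norm_eq_abs]
        have h2 := abs_green_sub_le hR hyx hy
        have h3 := abs_log_sub_sub_logKer_le hy hyx
        have h4 : |logKer x y| ≤ log (1 + ‖x‖) := abs_le.2 ⟨neg_le_logKer x y, logKer_le x y⟩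
        have h5 : |log ‖y - x‖ - log ‖y‖| ≤ log (1 + ‖x‖) + ‖y - x‖⁻¹ + ‖y‖⁻¹ := by
          rw [abs_le] at *
          constructor <;> linarith [h3.1, h3.2, h4.1, h4.2]
        have h6 := mul_le_mul_of_nonneg_right h5 (hf.nonneg y)
        have h7 := mul_le_mul_of_nonneg_right h2 (hf.nonneg y)
        nlinarith
      · filter_upwards [ae_ne_zero, hne x] with y hy hyx
        exact (tendsto_green_sub hyx hy).mul_const _
    refine h1.congr' ?_
    filter_upwards [eventually_gt_atTop 0] with R hR
    have h0 := hpi 0 hR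
    simp only [sub_zero] at h0
    rw [hpot x, hpot 0]
    simp only [sub_zero]
    rw [← integral_sub (hpi x hR) h0]
    simp only [sub_mul]
  have hrep (x : R2) : cutMass * w x - cutMass * w 0
      = ∫ y, 1 / 4 * (log ‖y‖ - log ‖y - x‖) * f y := by
    have h1 := (tendsto_mean_sub hf hw hlap hnp x).add (hlim x)
    rw [zero_add] at h1
    refine tendsto_nhds_unique (tendsto_const_nhds.congr' ?_) h1
    filter_upwards [eventually_gt_atTop 0] with R hR
    rw [← mean_add_pot hf hw hlap hR x, ← mean_add_pot hf hw hlap hR 0]; ring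
  have hm := cutMass_pos
  refine ⟨1 / cutMass * (cutMass * |w 0| + D / 2), fun x => ?_⟩
  have h1 : |∫ y, 1 / 4 * (log ‖y‖ - log ‖y - x‖) * f y + 1 / 4 * (logKer x y * f y)| ≤ D / 2 := by
    have hb : ∫ y, 1 / 4 * (‖y - x‖⁻¹ * f y + ‖y‖⁻¹ * f y) ≤ D / 2 := by
      rw [integral_const_mul, integral_add (hinv x).1 hinv0.1]
      linarith [(hinv x).2, hinv0.2]
    rw [← Real.norm_eq_abs]
    refine (norm_integral_le_of_norm_le (((hinv x).1.add hinv0.1).const_mul (1 / 4)) ?_).trans hb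
    filter_upwards [ae_ne_zero, hne x] with y hy hyx
    have h3 := mul_le_mul_of_nonneg_right (abs_log_sub_sub_logKer_le hy hyx) (hf.nonneg y)
    have h4 : 1 / 4 * (log ‖y‖ - log ‖y - x‖) * f y + 1 / 4 * (logKer x y * f y)
      = -(1 / 4) * (((log ‖y - x‖ - log ‖y‖) - logKer x y) * f y) := by ring
    rw [h4, norm_mul, norm_mul, Real.norm_of_nonneg (hf.nonneg y), Real.norm_eq_abs,
      Real.norm_eq_abs]
    norm_num
    linarith
  have hi1 : Integrable fun y => 1 / 4 * (log ‖y‖ - log ‖y - x‖) * f y := by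
    refine (((((hf.integrable.const_mul (log (1 + ‖x‖))).add (hinv x).1).add hinv0.1).const_mul
      (1 / 4))).mono' ?_ ?_
    · refine Measurable.aestronglyMeasurable ?_
      have := hf.continuous.measurable
      fun_prop
    · filter_upwards [ae_ne_zero, hne x] with y hy hyx
      have h3 := abs_log_sub_sub_logKer_le hy hyx
      have h4 : |logKer x y| ≤ log (1 + ‖x‖) := abs_le.2 ⟨neg_le_logKer x y, logKer_le x y⟩
      have h5 : |1 / 4 * (log ‖y‖ - log ‖y - x‖)|
          ≤ 1 / 4 * (log (1 + ‖x‖) + ‖y - x‖⁻¹ + ‖y‖⁻¹) := by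
        rw [abs_le] at *
        constructor <;> linarith [h3.1, h3.2, h4.1, h4.2]
      rw [norm_mul, Real.norm_of_nonneg (hf.nonneg y), Real.norm_eq_abs]
      refine (mul_le_mul_of_nonneg_right h5 (hf.nonneg y)).trans_eq ?_
      simp only [Pi.add_apply]; ring
  rw [integral_add hi1 ((integrable_logKer_mul hf x).const_mul _), ← hrep, integral_const_mul] at h1
  have h2 : w x + 1 / (4 * cutMass) * ∫ y, logKer x y * f y = 1 / cutMass *
      (cutMass * w 0 + (cutMass * w x - cutMass * w 0 + 1 / 4 * ∫ y, logKer x y * f y)) := by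
    field_simp; ring
  rw [h2, abs_mul, abs_of_pos (by positivity)]
  refine mul_le_mul_of_nonneg_left ((abs_add_le _ _).trans ?_) (by positivity)
  rw [abs_mul, abs_of_pos hm]
  linarith

/-! ### Asymptotics at infinity -/

lemma le_logKer (x y : R2) : log (1 + ‖x‖) - 2 * log (1 + ‖y‖) ≤ logKer x y := by
  have h1 : log (1 + ‖x‖) ≤ log ((1 + ‖x - y‖) * (1 + ‖y‖)) := by
    refine log_le_log (by positivity) ?_
    nlinarith [norm_sub_norm_le x y, norm_nonneg y, norm_nonneg (x - y)]
  rw [log_mul (by positivity) (by positivity)] at h1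
  unfold logKer; linarith

lemma log_one_add_norm_nonneg (x : R2) : 0 ≤ log (1 + ‖x‖) :=
  log_nonneg (by linarith [norm_nonneg x])

lemma le_of_abs_add_logKer {w f : R2 → ℝ} (hf : IsSource f) {b C : ℝ} (hb : 0 < b)
    (hw : ∀ x, |w x + b * ∫ y, logKer x y * f y| ≤ C) (x : R2) :
    -C - b * (∫ y, f y) * log (1 + ‖x‖) ≤ w x := by
  have h1 : ∫ y, logKer x y * f y ≤ ∫ y, log (1 + ‖x‖) * f y :=
    integral_mono (integrable_logKer_mul hf x) (hf.integrable.const_mul _) fun y =>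
      mul_le_mul_of_nonneg_right (logKer_le x y) (hf.nonneg y)
  rw [integral_const_mul] at h1
  nlinarith [(abs_le.1 (hw x)).1, mul_le_mul_of_nonneg_left h1 hb.le]

/-- Only the mass of `f` far from the origin can spoil the decay rate, and it is small. -/
lemma exists_le_add_eps {w f : R2 → ℝ} (hf : IsSource f) {b C : ℝ} (hb : 0 < b)
    (hw : ∀ x, |w x + b * ∫ y, logKer x y * f y| ≤ C) {ε : ℝ} (hε : 0 < ε) :
    ∃ C', ∀ x, w x ≤ C' - (b * (∫ y, f y) - ε) * log (1 + ‖x‖) := by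
  set F := ∫ y, f y with hF
  obtain ⟨ρ, hρ0, hρ⟩ : ∃ ρ : ℝ, 0 ≤ ρ ∧ F - ∫ y in closedBall (0 : R2) ρ, f y ≤ ε / (2 * b) := by
    have h1 : Tendsto (fun ρ : ℝ => ∫ y in closedBall (0 : R2) ρ, f y) atTop (𝓝 F) :=
      (aecover_closedBall tendsto_id).integral_tendsto_of_countably_generated hf.integrable
    have h2 := h1.eventually (lt_mem_nhds (show F - ε / (2 * b) < F by
      have : 0 < ε / (2 * b) := by positivity
      linarith))
    obtain ⟨ρ, h3, h4⟩ := (h2.and (eventually_ge_atTop 0)).exists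
    exact ⟨ρ, h4, by linarith⟩
  refine ⟨C + 2 * b * log (1 + ρ) * F, fun x => ?_⟩
  set L := log (1 + ‖x‖) with hL
  have hL0 : 0 ≤ L := log_one_add_norm_nonneg x
  set g : R2 → ℝ := (closedBall (0 : R2) ρ).indicator f with hg
  have hgi : Integrable g := hf.integrable.indicator measurableSet_closedBall
  have hgI : ∫ y, g y = ∫ y in closedBall (0 : R2) ρ, f y :=
    integral_indicator measurableSet_closedBall
  have hρL : 0 ≤ log (1 + ρ) := log_nonneg (by linarith)
  have hle (y : R2) : L * f y - 2 * (log (1 + ρ) * f y + L * (f y - g y)) ≤ logKer x y * f y := by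
    by_cases hy : y ∈ closedBall (0 : R2) ρ
    · have h1 : g y = f y := indicator_of_mem hy _
      have h2 : log (1 + ‖y‖) ≤ log (1 + ρ) := by
        refine log_le_log (by positivity) ?_
        have : ‖y‖ ≤ ρ := by simpa using hy
        linarith
      have h3 := mul_le_mul_of_nonneg_right (le_logKer x y) (hf.nonneg y)
      rw [h1]
      nlinarith [hf.nonneg y]
    · have h1 : g y = 0 := indicator_of_notMem hy _
      have h3 := mul_le_mul_of_nonneg_right (neg_le_logKer x y) (hf.nonneg y)
      rw [h1]
      nlinarith [mul_nonneg hρL (hf.nonneg y)]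
  have hi1 : Integrable fun y => L * (f y - g y) := (hf.integrable.sub hgi).const_mul L
  have hi2 : Integrable fun y => 2 * (log (1 + ρ) * f y + L * (f y - g y)) :=
    ((hf.integrable.const_mul _).add hi1).const_mul 2
  have h1 := integral_mono ((hf.integrable.const_mul L).sub hi2) (integrable_logKer_mul hf x) hle
  have h2 : ∫ y, (L * f y - 2 * (log (1 + ρ) * f y + L * (f y - g y)))
      = L * F - 2 * (log (1 + ρ) * F + L * (F - ∫ y in closedBall (0 : R2) ρ, f y)) := by
    rw [integral_sub (hf.integrable.const_mul L) hi2, integral_const_mul, integral_const_mul,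
      integral_add (hf.integrable.const_mul _) hi1,
      integral_const_mul, integral_const_mul, integral_sub hf.integrable hgi, hgI]
  have h3 : L * F - 2 * (log (1 + ρ) * F + L * (ε / (2 * b))) ≤ ∫ y, logKer x y * f y := by
    refine le_trans ?_ ((h2.symm.trans_le h1))
    nlinarith [mul_le_mul_of_nonneg_left hρ hL0]
  have h4 := mul_le_mul_of_nonneg_left h3 hb.le
  have h5 : b * (L * (ε / (2 * b))) = L * ε / 2 := by field_simp
  nlinarith [(abs_le.1 (hw x)).2]

lemma exists_le_of_integrable_log {w f : R2 → ℝ} (hf : IsSource f) {b C : ℝ} (hb : 0 < b)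
    (hw : ∀ x, |w x + b * ∫ y, logKer x y * f y| ≤ C)
    (hl : Integrable fun y => log (1 + ‖y‖) * f y) :
    ∃ C', ∀ x, w x ≤ C' - b * (∫ y, f y) * log (1 + ‖x‖) := by
  refine ⟨C + 2 * b * ∫ y, log (1 + ‖y‖) * f y, fun x => ?_⟩
  have hle (y : R2) : log (1 + ‖x‖) * f y - 2 * (log (1 + ‖y‖) * f y) ≤ logKer x y * f y := by
    have h3 := mul_le_mul_of_nonneg_right (le_logKer x y) (hf.nonneg y)
    linarith
  have h1 := integral_mono ((hf.integrable.const_mul _).sub (hl.const_mul 2))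
    (integrable_logKer_mul hf x) hle
  simp only [Pi.sub_apply] at h1
  rw [integral_sub (hf.integrable.const_mul _) (hl.const_mul 2), integral_const_mul,
    integral_const_mul] at h1
  nlinarith [(abs_le.1 (hw x)).2, mul_le_mul_of_nonneg_left h1 hb.le]

lemma not_integrable_inv_sq : ¬ Integrable fun x : R2 => ((1 + ‖x‖) ^ 2)⁻¹ := by
  intro h
  rw [integrable_fun_norm_addHaar (volume : Measure R2) (f := fun r : ℝ => ((1 + r) ^ 2)⁻¹)] at h
  have h1 : IntegrableOn (fun r : ℝ => r⁻¹) (Ioi 1) := by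
    refine ((h.mono_set (Ioi_subset_Ioi zero_le_one)).const_mul 4).mono'
      (measurable_inv.aestronglyMeasurable) ?_
    filter_upwards [ae_restrict_mem measurableSet_Ioi] with r hr
    have hr1 : 1 < r := hr
    have hr0 : 0 < r := by linarith
    simp only [finrank_euclideanSpace, Fintype.card_fin, smul_eq_mul]
    rw [Real.norm_of_nonneg (by positivity), inv_eq_one_div, div_le_iff₀ hr0]
    norm_num
    have : 4 * (r * ((1 + r) ^ 2)⁻¹) * r = 4 * r ^ 2 / (1 + r) ^ 2 := by
      field_simp
    rw [this, le_div_iff₀ (by positivity)]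
    nlinarith
  exact not_integrableOn_Ioi_inv h1

lemma exp_neg_mul_log (β : ℝ) (x : R2) : exp (-(β * log (1 + ‖x‖))) = (1 + ‖x‖) ^ (-β) := by
  rw [rpow_def_of_pos (by positivity)]
  congr 1; ring

/-- The total mass exceeds the threshold for integrability of `exp w`. -/
lemma two_lt_of_source {w f : R2 → ℝ} (hf : IsSource f)
    (hfe : ∀ x, f x = exp (w x) * (1 - exp (w x))) {b C : ℝ} (hb : 0 < b) (hF : 0 < ∫ y, f y)
    (hw : ∀ x, |w x + b * ∫ y, logKer x y * f y| ≤ C) : 2 < b * ∫ y, f y := by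
  by_contra! hβ
  set β := b * ∫ y, f y with hβd
  have hβ0 : 0 < β := by positivity
  obtain ⟨C', hC'⟩ := exists_le_add_eps hf hb hw (half_pos hβ0)
  rw [← hβd] at hC'
  have t : Tendsto (fun r : ℝ => log (1 + r)) atTop atTop :=
    Real.tendsto_log_atTop.comp (tendsto_atTop_add_const_left _ _ tendsto_id)
  obtain ⟨r, hr⟩ := eventually_atTop.1 (t.eventually_ge_atTop ((C' + 1) / (β / 2)))
  apply not_integrable_inv_sq
  have hb1 : Integrable ((closedBall (0 : R2) r).indicator fun _ => (1 : ℝ)) :=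
    (integrable_indicator_iff measurableSet_closedBall).2
      (integrableOn_const measure_closedBall_lt_top.ne)
  refine (hb1.add (hf.integrable.const_mul (2 * exp C))).mono' ?_
    (Eventually.of_forall fun x => ?_)
  · exact Measurable.aestronglyMeasurable (by fun_prop)
  rw [Real.norm_of_nonneg (by positivity), Pi.add_apply]
  by_cases hx : x ∈ closedBall (0 : R2) r
  · rw [indicator_of_mem hx]
    have h1 : ((1 + ‖x‖) ^ 2)⁻¹ ≤ 1 :=
      inv_le_one_of_one_le₀ (one_le_pow₀ (by linarith [norm_nonneg x]))
    nlinarith [mul_nonneg (mul_nonneg zero_le_two (exp_pos C).le) (hf.nonneg x)]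
  · rw [indicator_of_notMem hx, zero_add]
    have hx' : r ≤ ‖x‖ := by
      have : r < ‖x‖ := by simpa using hx
      exact this.le
    have h1 := hr _ hx'
    rw [div_le_iff₀ (by positivity)] at h1
    have h2 : w x ≤ -1 := by linarith [hC' x]
    have h3 : exp (w x) ≤ 1 / 2 := by
      refine (exp_le_exp.2 h2).trans ?_
      have := exp_neg_one_lt_d9
      linarith
    have h4 : exp (-C) * ((1 + ‖x‖) ^ 2)⁻¹ ≤ exp (w x) := by
      have h5 := le_of_abs_add_logKer hf hb hw x
      have h6 : -C + -(2 * log (1 + ‖x‖)) ≤ w x := by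
        rw [← hβd] at h5
        nlinarith [log_one_add_norm_nonneg x]
      have h7 := exp_le_exp.2 h6
      rw [exp_add, exp_neg_mul_log, rpow_neg (by positivity)] at h7
      exact_mod_cast h7
    have h8 : exp (w x) ≤ 2 * f x := by
      rw [hfe]; nlinarith [exp_pos (w x)]
    calc ((1 + ‖x‖) ^ 2)⁻¹ = exp C * (exp (-C) * ((1 + ‖x‖) ^ 2)⁻¹) := by
          rw [← mul_assoc, ← exp_add]; simp
      _ ≤ exp C * (2 * f x) := mul_le_mul_of_nonneg_left (h4.trans h8) (exp_pos C).le
      _ = _ := by ring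

lemma integrable_log_mul {w f : R2 → ℝ} (hf : IsSource f)
    (hfe : ∀ x, f x = exp (w x) * (1 - exp (w x))) {b C : ℝ} (hb : 0 < b)
    (hβ : 2 < b * ∫ y, f y) (hw : ∀ x, |w x + b * ∫ y, logKer x y * f y| ≤ C) :
    Integrable fun y => log (1 + ‖y‖) * f y := by
  set β := b * ∫ y, f y with hβd
  obtain ⟨ε, hε⟩ : ∃ ε, ε = (β - 2) / 2 := ⟨_, rfl⟩
  have hε0 : 0 < ε := by linarith
  obtain ⟨C', hC'⟩ := exists_le_add_eps hf hb hw hε0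
  rw [← hβd, show β - ε = 2 + ε by linarith] at hC'
  have hi : Integrable fun x : R2 => (1 + ‖x‖) ^ (-(2 + ε / 2)) :=
    integrable_one_add_norm (by simp; linarith)
  have hlc : Continuous fun y : R2 => log (1 + ‖y‖) :=
    Continuous.log (by fun_prop) fun y => by positivity
  refine (hi.const_mul (exp C' / (ε / 2))).mono' (hlc.mul hf.continuous).aestronglyMeasurable
    (Eventually.of_forall fun x => ?_)
  rw [Real.norm_of_nonneg (mul_nonneg (log_one_add_norm_nonneg x) (hf.nonneg x))]
  have hx1 : (0 : ℝ) < 1 + ‖x‖ := by positivity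
  have h1 : log (1 + ‖x‖) ≤ (1 + ‖x‖) ^ (ε / 2) / (ε / 2) := log_le_rpow_div hx1.le (by positivity)
  have h2 : f x ≤ exp C' * (1 + ‖x‖) ^ (-(2 + ε)) := by
    have h3 : f x ≤ exp (w x) := by
      rw [hfe]; nlinarith [exp_pos (w x)]
    refine h3.trans ?_
    rw [← exp_neg_mul_log, ← exp_add]
    exact exp_le_exp.2 (by linarith [hC' x])
  calc log (1 + ‖x‖) * f x
      ≤ ((1 + ‖x‖) ^ (ε / 2) / (ε / 2)) * (exp C' * (1 + ‖x‖) ^ (-(2 + ε))) :=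
        mul_le_mul h1 h2 (hf.nonneg x) (by positivity)
    _ = exp C' / (ε / 2) * ((1 + ‖x‖) ^ (ε / 2) * (1 + ‖x‖) ^ (-(2 + ε))) := by ring
    _ = _ := by rw [← rpow_add hx1]; congr 2; ring

/-- Strict negativity, by the strong maximum principle. -/
lemma w_neg {w : R2 → ℝ} (hw : ContDiff ℝ 2 w) (hne : ∃ x, w x ≠ 0)
    (heq : ∀ x : R2, lap w x + exp (w x) * (1 - exp (w x)) = 0) (x : R2) : w x < 0 := by
  refine (w_nonpos hw heq x).lt_of_ne fun hx => ?_
  obtain ⟨p, hp⟩ := hne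
  refine hp ?_
  have h := strong_max (z := fun y => -1 * w y) (contDiff_const.mul hw) isOpen_univ convex_univ
    zero_le_one (fun y _ => by linarith [w_nonpos hw heq y]) (fun y _ => ?_) (mem_univ x)
    (by simp [hx]) p (mem_univ p)
  · linarith
  · rw [lap_const_mul _ hw.contDiffAt]
    have h1 := add_one_le_exp (w y)
    have h2 := exp_le_one_iff.2 (w_nonpos hw heq y)
    nlinarith [heq y, exp_pos (w y)]

/-- radial symmetry and monotonicity of entire Chern–Simons vortices without
singular source. -/
theorem stmt15 (w : R2 → ℝ) (hsmooth : ContDiff ℝ (⊤ : ℕ∞) w)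
    (hne : ∃ x : R2, w x ≠ 0)
    (heq : ∀ x : R2, lap w x + Real.exp (w x) * (1 - Real.exp (w x)) = 0)
    (hint : Integrable (fun x : R2 => Real.exp (w x) * (1 - Real.exp (w x)))) :
    ∃ (x₀ : R2) (W : ℝ → ℝ), StrictAntiOn W (Set.Ici 0) ∧
      ∀ x : R2, w x = W ‖x - x₀‖ := by
  have hw : ContDiff ℝ 2 w := hsmooth.of_le (by
    exact WithTop.coe_le_coe.2 le_top)
  have hneg := w_neg hw hne heq
  set f : R2 → ℝ := fun x => exp (w x) * (1 - exp (w x)) with hf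
  have hfpos (x : R2) : 0 < f x := mul_pos (exp_pos _) (sub_pos.2 (exp_lt_one_iff.2 (hneg x)))
  have hfc : Continuous f := by
    have := hw.continuous
    fun_prop
  have hs : IsSource f :=
    ⟨hfc, fun x => (hfpos x).le, fun x => by
      have := exp_pos (w x)
      have := exp_lt_one_iff.2 (hneg x)
      simp only [hf]; nlinarith, hint⟩
  have hF : 0 < ∫ y, f y := by
    rw [integral_pos_iff_support_of_nonneg hs.nonneg hint,
      show Function.support f = univ from eq_univ_of_forall fun x => (hfpos x).ne']
    simp
  obtain ⟨C, hC⟩ := exists_abs_add_integral_logKer_le hs hw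
    (fun x => by simp only [hf]; linarith [heq x]) fun x => (hneg x).le
  have hb : 0 < 1 / (4 * cutMass) := by have := cutMass_pos; positivity
  have hβ := two_lt_of_source hs (fun _ => rfl) hb hF hC
  obtain ⟨C', hC'⟩ := exists_le_of_integrable_log hs hb hC
    (integrable_log_mul hs (fun _ => rfl) hb hβ hC)
  refine radial_of_log_asymptotics hw heq (fun x => (hneg x).le) hβ (K := max C C') fun x => ?_
  rw [abs_le]
  constructor
  · linarith [le_of_abs_add_logKer hs hb hC x, le_max_left C C']
  · linarith [hC' x, le_max_right C C']

end
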